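/- Let n ≥ 1, p, q, r ≥ 1, α > −1 and δ > 0. Let {a_k} be a separated sequence in 𝔹ₙ, let μ be a positive Borel measure on 𝔹ₙ, and assume that the Carleson embedding J_μ : A^p_α → L^q(dμ) is r-summing. Set β_k = (1−|a_k|²)^{−(n+1+α)/p} μ(B(a_k,δ))^{1/q}, and let κ = 2p/(2p−2q+pq) for 1 ≤ p ≤ 2 and 1 ≤ q ≤ 2, with the convention κ = ∞ when (p,q) = (1,2). Then, with a constant C depending only on n, p, q, r, α, δ and the separation constant of {a_k}: (1) if 1 ≤ p, q ≤ 2, then ‖{β_k}‖_{ℓ^{κq}} ≤ C·π_r(J_μ) (ℓ^∞ when κ = ∞); (2) if p > 1, q ≥ 1 and 1 ≤ r ≤ p' = p/(p−1), then ‖{β_k}‖_{ℓ^{p'}} ≤ C·π_r(J_μ); (3) if p > 1, q ≥ 1 and p' ≤ r < ∞, then ‖{β_k}‖_{ℓ^r} ≤ C·π_r(J_μ); (4) if p ≥ 2 and q ≥ 2, then ‖{β_k}‖_{ℓ^q} ≤ C·π_r(J_μ). -/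

import Mathlib

open MeasureTheory Metric Filter Complex
open scoped ENNReal NNReal BigOperators ComplexConjugate

noncomputable section

/-- `ℂⁿ` with the Euclidean norm. -/
abbrev En (n : ℕ) := EuclideanSpace ℂ (Fin n)

instance (n : ℕ) : InnerProductSpace ℝ (En n) := InnerProductSpace.complexToReal
instance (n : ℕ) : MeasurableSpace (En n) := borel _
instance (n : ℕ) : BorelSpace (En n) := ⟨rfl⟩
instance (n : ℕ) : FiniteDimensional ℝ (En n) := Module.Finite.trans ℂ (En n)

/-- The open unit ball `𝔹ₙ`. -/
def unitBall (n : ℕ) : Set (En n) := Metric.ball 0 1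

/-- The Hermitian pairing `⟨z,w⟩ = ∑ zⱼ conj wⱼ`. -/
def herm {n : ℕ} (z w : En n) : ℂ := ∑ j, z j * conj (w j)

/-- Normalized Lebesgue volume measure on `𝔹ₙ` (total mass 1). -/
def vMeas (n : ℕ) : Measure (En n) :=
  (volume (Metric.ball (0 : En n) 1))⁻¹ • volume.restrict (Metric.ball 0 1)

/-- The normalizing constant `c_α = Γ(n+1+α)/(n!·Γ(α+1))`. -/
def volConst (n : ℕ) (α : ℝ) : ℝ :=
  Real.Gamma (n + 1 + α) / ((n.factorial : ℝ) * Real.Gamma (α + 1))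

/-- The weighted measure `dv_α = c_α (1-|z|²)^α dv`. -/
def wMeas (n : ℕ) (α : ℝ) : Measure (En n) :=
  (vMeas n).withDensity fun z => ENNReal.ofReal (volConst n α * (1 - ‖z‖ ^ 2) ^ α)

-- The Möbius involution `φ_z` of `𝔹ₙ` interchanging `z` and `0`, evaluated at `w`.
open scoped Classical in
def mobius {n : ℕ} (z w : En n) : En n :=
  if z = 0 then -w
  else
    (1 - herm w z)⁻¹ •
      (z - (herm w z / herm z z) • z -
        ((Real.sqrt (1 - ‖z‖ ^ 2) : ℝ) : ℂ) • (w - (herm w z / herm z z) • z))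

/-- The Bergman metric on `𝔹ₙ`. -/
def bergmanDist {n : ℕ} (z w : En n) : ℝ :=
  (1 / 2) * Real.log ((1 + ‖mobius z w‖) / (1 - ‖mobius z w‖))

/-- The Bergman metric ball `B(z,r)`. -/
def bergmanBall {n : ℕ} (z : En n) (r : ℝ) : Set (En n) :=
  {w | w ∈ unitBall n ∧ bergmanDist z w < r}

/-- The Möbius invariant measure `dλ(z) = (1-|z|²)^{-(n+1)} dv(z)`. -/
def invMeas (n : ℕ) : Measure (En n) :=
  (vMeas n).withDensity fun z => ENNReal.ofReal ((1 - ‖z‖ ^ 2) ^ (-(n + 1 : ℝ)))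

/-- A sequence in `𝔹ₙ` which is separated (with separation constant `ε`)
in the Bergman metric. -/
def IsSeparated {n : ℕ} (a : ℕ → En n) (ε : ℝ) : Prop :=
  (∀ k, a k ∈ unitBall n) ∧ ∀ i j, i ≠ j → ε ≤ bergmanDist (a i) (a j)

/-- A `δ`-lattice in the Bergman metric. -/
def IsLattice {n : ℕ} (a : ℕ → En n) (δ : ℝ) : Prop :=
  (∀ k, a k ∈ unitBall n) ∧
    (∀ z ∈ unitBall n, ∃ k, z ∈ bergmanBall (a k) δ) ∧
      ∀ i j, i ≠ j → Disjoint (bergmanBall (a i) (δ / 4)) (bergmanBall (a j) (δ / 4))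

/-- `T` satisfies the `(r,s)`-summing inequality with constant `C`. -/
def SummingBoundWith (r s : ℝ) {X Y : Type*} [NormedAddCommGroup X] [NormedSpace ℂ X]
    [NormedAddCommGroup Y] (T : X → Y) (C : ℝ) : Prop :=
  ∀ (m : ℕ) (x : Fin m → X),
    (∑ k, ‖T (x k)‖ ^ r) ^ (1 / r) ≤
      C * ⨆ φ : {φ : X →L[ℂ] ℂ // ‖φ‖ ≤ 1}, (∑ k, ‖φ.1 (x k)‖ ^ s) ^ (1 / s)

/-- `T` is `(r,s)`-summing. -/
def IsSummingRS (r s : ℝ) {X Y : Type*} [NormedAddCommGroup X] [NormedSpace ℂ X]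
    [NormedAddCommGroup Y] (T : X → Y) : Prop :=
  ∃ C, 0 ≤ C ∧ SummingBoundWith r s T C

/-- The `(r,s)`-summing norm `π_{r,s}(T)`. -/
def summingNorm (r s : ℝ) {X Y : Type*} [NormedAddCommGroup X] [NormedSpace ℂ X]
    [NormedAddCommGroup Y] (T : X → Y) : ℝ :=
  sInf {C | 0 ≤ C ∧ SummingBoundWith r s T C}

/-- The subspace of `Lp` consisting of (a.e. classes of) functions having a representative
holomorphic on `Ω`. -/
def holoSubmodule (n : ℕ) (p : ℝ≥0∞) [Fact (1 ≤ p)] (Ω : Set (En n)) (μ : Measure (En n)) :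
    Submodule ℂ (Lp ℂ p μ) where
  carrier := {f | ∃ g : En n → ℂ, DifferentiableOn ℂ g Ω ∧ (f : En n → ℂ) =ᵐ[μ] g}
  zero_mem' := ⟨fun _ => 0, differentiableOn_const 0, Lp.coeFn_zero ℂ p μ⟩
  add_mem' := by
    rintro f f' ⟨g, hg, hfg⟩ ⟨g', hg', hfg'⟩
    exact ⟨g + g', hg.add hg', (Lp.coeFn_add f f').trans (hfg.add hfg')⟩
  smul_mem' := by
    rintro c f ⟨g, hg, hfg⟩
    exact ⟨c • g, hg.const_smul c, (Lp.coeFn_smul c f).trans (hfg.const_smul c)⟩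

/-- The weighted Bergman space `A^p_α` as a subspace of `L^p(dv_α)`. -/
abbrev BergmanSpace (n : ℕ) (p α : ℝ) [Fact (1 ≤ ENNReal.ofReal p)] :=
  ↥(holoSubmodule n (ENNReal.ofReal p) (unitBall n) (wMeas n α))

/-- The kernel `H_{p,z}(w) = (1-⟨z,w⟩)^{-b}`. -/
def Hker {n : ℕ} (b : ℝ) (z : En n) : En n → ℂ := fun w => (1 - herm z w) ^ (-(b : ℂ))

/-- The `L^p(dv_α)` norm of a function. -/
def lpNormOn (n : ℕ) (p α : ℝ) (g : En n → ℂ) : ℝ :=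
  (∫ w, ‖g w‖ ^ p ∂wMeas n α) ^ (1 / p)

/-- The normalized test function `h_{p,z} = H_{p,z}/‖H_{p,z}‖_{p,α}`
(with kernel exponent `b`). -/
def hTest (n : ℕ) (p α b : ℝ) (z : En n) : En n → ℂ := fun w =>
  Hker b z w / ((lpNormOn n p α (Hker b z) : ℝ) : ℂ)

/-- The `ℓ^s` norm of a sequence of reals, valued in `ℝ≥0∞`. -/
def ellNormE (s : ℝ) (b : ℕ → ℝ) : ℝ≥0∞ := (∑' k, ENNReal.ofReal (b k) ^ s) ^ (1 / s)

/-- The `ℓ^s` norm of a sequence of extended reals. -/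
def ellNormE' (s : ℝ) (b : ℕ → ℝ≥0∞) : ℝ≥0∞ := (∑' k, b k ^ s) ^ (1 / s)

/-- The `L^s(𝔹ₙ,dλ)` norm of a nonnegative function, valued in `ℝ≥0∞`. -/
def lamNormE (n : ℕ) (s : ℝ) (g : En n → ℝ) : ℝ≥0∞ :=
  (∫⁻ z, ENNReal.ofReal (g z) ^ s ∂invMeas n) ^ (1 / s)

/-- The Bergman projection `P_β`. -/
def bergmanProj (n : ℕ) (β : ℝ) (f : En n → ℂ) (z : En n) : ℂ :=
  ∫ w, f w * (1 - herm z w) ^ (-((n : ℂ) + 1 + (β : ℂ))) ∂wMeas n β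

/-- The conjugate Bergman projection. -/
def conjBergmanProj (n : ℕ) (β : ℝ) (f : En n → ℂ) (z : En n) : ℂ :=
  ∫ w, f w * (1 - herm w z) ^ (-((n : ℂ) + 1 + (β : ℂ))) ∂wMeas n β

/-- `g` is bounded and holomorphic on `𝔹ₙ`. -/
def BoundedHolo (n : ℕ) (g : En n → ℂ) : Prop :=
  DifferentiableOn ℂ g (unitBall n) ∧ ∃ M, ∀ z ∈ unitBall n, ‖g z‖ ≤ M

/-- The big Hankel operator `H^β_f(g) = f g - P_β(f g)` at the level of functions. -/
def hankelFun (n : ℕ) (β : ℝ) (f g : En n → ℂ) : En n → ℂ := fun z =>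
  f z * g z - bergmanProj n β (fun w => f w * g w) z

/-- The little Hankel operator `h^β_f(g) = conj-P_β(f g)` at the level of functions. -/
def littleHankelFun (n : ℕ) (β : ℝ) (f g : En n → ℂ) : En n → ℂ :=
  conjBergmanProj n β fun w => f w * g w

/-- `T : A^p_α → L^q(dv_β)` extends the big Hankel operator `H^β_f` from the
bounded holomorphic functions. -/
def ExtendsBigHankel (n : ℕ) (p q α β : ℝ) [Fact (1 ≤ ENNReal.ofReal p)]
    [Fact (1 ≤ ENNReal.ofReal q)] (f : En n → ℂ)
    (T : BergmanSpace n p α → Lp ℂ (ENNReal.ofReal q) (wMeas n β)) : Prop :=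
  ∀ g : En n → ℂ, BoundedHolo n g →
    ∀ G : BergmanSpace n p α,
      ((G : Lp ℂ (ENNReal.ofReal p) (wMeas n α)) : En n → ℂ) =ᵐ[wMeas n α] g →
        (T G : En n → ℂ) =ᵐ[wMeas n β] hankelFun n β f g

/-- `T : A^p_α → L^q(dv_β)` extends the little Hankel operator `h^β_f` from the
bounded holomorphic functions. -/
def ExtendsLittleHankel (n : ℕ) (p q α β : ℝ) [Fact (1 ≤ ENNReal.ofReal p)]
    [Fact (1 ≤ ENNReal.ofReal q)] (f : En n → ℂ)
    (T : BergmanSpace n p α → Lp ℂ (ENNReal.ofReal q) (wMeas n β)) : Prop :=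
  ∀ g : En n → ℂ, BoundedHolo n g →
    ∀ G : BergmanSpace n p α,
      ((G : Lp ℂ (ENNReal.ofReal p) (wMeas n α)) : En n → ℂ) =ᵐ[wMeas n α] g →
        (T G : En n → ℂ) =ᵐ[wMeas n β] littleHankelFun n β f g

/-- `J : A^p_α → L^q(dμ)` represents the Carleson embedding `J_μ f = f`. -/
def RepresentsEmbedding (n : ℕ) (p q α : ℝ) [Fact (1 ≤ ENNReal.ofReal p)]
    [Fact (1 ≤ ENNReal.ofReal q)] (μ : Measure (En n))
    (J : BergmanSpace n p α → Lp ℂ (ENNReal.ofReal q) μ) : Prop :=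
  ∀ (G : BergmanSpace n p α) (g : En n → ℂ), DifferentiableOn ℂ g (unitBall n) →
    ((G : Lp ℂ (ENNReal.ofReal p) (wMeas n α)) : En n → ℂ) =ᵐ[wMeas n α] g →
      (J G : En n → ℂ) =ᵐ[μ] g

/-- The IDA function `G_{q,δ}(f)(z)`. -/
def Gq (n : ℕ) (q δ : ℝ) (f : En n → ℂ) (z : En n) : ℝ :=
  ⨅ h : {h : En n → ℂ // DifferentiableOn ℂ h (bergmanBall z δ)},
    ((vMeas n (bergmanBall z δ)).toReal⁻¹ *
        ∫ w in bergmanBall z δ, ‖f w - h.1 w‖ ^ q ∂vMeas n) ^ (1 / q)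

/-- The average of `f` over the Bergman ball `B(z,δ)`. -/
def ballAvg (n : ℕ) (δ : ℝ) (f : En n → ℂ) (z : En n) : ℂ :=
  ((vMeas n (bergmanBall z δ)).toReal⁻¹ : ℝ) • ∫ w in bergmanBall z δ, f w ∂vMeas n

/-- The local mean oscillation `MO_{q,δ}(f)(z)`. -/
def MOq (n : ℕ) (q δ : ℝ) (f : En n → ℂ) (z : En n) : ℝ :=
  ((vMeas n (bergmanBall z δ)).toReal⁻¹ *
      ∫ w in bergmanBall z δ, ‖f w - ballAvg n δ f z‖ ^ q ∂vMeas n) ^ (1 / q)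

/-- The integral operator `V_{b,β}`. -/
def Vop (n : ℕ) (b β : ℝ) (f : En n → ℂ) (z : En n) : ℂ :=
  ((volConst n (b + β) / volConst n β : ℝ) : ℂ) * (((1 - ‖z‖ ^ 2) ^ b : ℝ) : ℂ) *
    ∫ w, f w * (1 - herm z w) ^ (-((n : ℂ) + 1 + (β : ℂ) + (b : ℂ))) ∂wMeas n β

/-- The norm of the invariant gradient `|∇̃f(z)| = |∇(f ∘ φ_z)(0)|`. -/
def invGradNorm (n : ℕ) (f : En n → ℂ) (z : En n) : ℝ :=
  ‖fderiv ℂ (fun w => f (mobius z w)) 0‖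

/-- The Besov space norm `‖f‖_{B^γ_s}`, valued in `ℝ≥0∞`. -/
def besovNorm (n : ℕ) (s γ : ℝ) (f : En n → ℂ) : ℝ≥0∞ :=
  (∫⁻ z, ENNReal.ofReal ((1 - ‖z‖ ^ 2) ^ γ * invGradNorm n f z) ^ s ∂invMeas n) ^ (1 / s)

/-- The lattice quantity `β_k = (1-|a_k|²)^{-(n+1+α)/p}·μ(B(a_k,δ))^{1/q}`. -/
def carlesonBeta (n : ℕ) (p q α δ : ℝ) (μ : Measure (En n)) (a : ℕ → En n) (k : ℕ) :
    ℝ≥0∞ :=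
  ENNReal.ofReal ((1 - ‖a k‖ ^ 2) ^ (-(((n : ℝ) + 1 + α) / p))) *
    μ (bergmanBall (a k) δ) ^ ((1 : ℝ) / q)

section Geometry

lemma herm_eq_inner {n : ℕ} (z w : En n) : herm z w = inner ℂ w z := by
  simp [herm, PiLp.inner_apply]

lemma inner_self_eq_ofReal {n : ℕ} (z : En n) : inner ℂ z z = ((‖z‖ ^ 2 : ℝ) : ℂ) := by
  rw [inner_self_eq_norm_sq_to_K]
  push_cast
  rfl

lemma one_sub_inner_ne_zero {n : ℕ} {z w : En n} (hz : ‖z‖ < 1) (hw : ‖w‖ < 1) :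
    1 - inner ℂ z w ≠ 0 := by
  intro h
  have h1 : ‖inner ℂ z w‖ ≤ ‖z‖ * ‖w‖ := norm_inner_le_norm z w
  rw [← sub_eq_zero.mp h, norm_one] at h1
  nlinarith [norm_nonneg z, norm_nonneg w]

lemma one_sub_norm_sq_pos {n : ℕ} {z : En n} (hz : ‖z‖ < 1) : 0 < 1 - ‖z‖ ^ 2 := by
  nlinarith [norm_nonneg z]

lemma norm_one_sub_sq (x : ℂ) : ‖1 - x‖ ^ 2 = 1 - 2 * x.re + ‖x‖ ^ 2 := by
  rw [← Complex.normSq_eq_norm_sq, ← Complex.normSq_eq_norm_sq]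
  simp [Complex.normSq_apply]
  ring

/-- The fundamental identity `1 - |φ_z(w)|² = (1-|z|²)(1-|w|²)/|1-⟨z,w⟩|²`. -/
lemma norm_mobius_sq {n : ℕ} {z w : En n} (hz : ‖z‖ < 1) (hw : ‖w‖ < 1) :
    ‖mobius z w‖ ^ 2 = 1 - (1 - ‖z‖ ^ 2) * (1 - ‖w‖ ^ 2) / ‖1 - inner ℂ z w‖ ^ 2 := by
  by_cases h0 : z = 0
  · subst h0
    simp [mobius]
  have hz0 : 0 < ‖z‖ := norm_pos_iff.mpr h0
  have hne := one_sub_inner_ne_zero hz hw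
  have hne' : ‖1 - inner ℂ z w‖ ≠ 0 := norm_ne_zero_iff.mpr hne
  have hzz : herm z z = ((‖z‖ ^ 2 : ℝ) : ℂ) := by
    rw [herm_eq_inner, inner_self_eq_ofReal]
  set x : ℂ := inner ℂ z w with hx
  have hwz : herm w z = x := herm_eq_inner w z
  set c : ℂ := x / ((‖z‖ ^ 2 : ℝ) : ℂ) with hc
  have hzc : ((‖z‖ ^ 2 : ℝ) : ℂ) ≠ 0 := by exact_mod_cast (pow_pos hz0 2).ne'
  have horth : inner ℂ z (w - c • z) = 0 := by
    rw [inner_sub_right, inner_smul_right, inner_self_eq_ofReal, ← hx, hc,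
      div_mul_cancel₀ _ hzc, sub_self]
  have hQ : ‖w - c • z‖ ^ 2 = ‖w‖ ^ 2 - ‖x‖ ^ 2 / ‖z‖ ^ 2 := by
    have h1 : w = (w - c • z) + c • z := by abel
    have h2 : ‖w‖ ^ 2 = ‖w - c • z‖ ^ 2 + ‖c • z‖ ^ 2 := by
      conv_lhs => rw [h1]
      have := norm_add_sq_eq_norm_sq_add_norm_sq_of_inner_eq_zero (𝕜 := ℂ) (w - c • z) (c • z)
        (by rw [inner_smul_right, ← inner_conj_symm, horth]; simp)
      simpa [sq] using this
    rw [h2, norm_smul, hc, norm_div, Complex.norm_real, Real.norm_of_nonneg (by positivity)]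
    field_simp
    ring
  have hs : (Real.sqrt (1 - ‖z‖ ^ 2)) ^ 2 = 1 - ‖z‖ ^ 2 :=
    Real.sq_sqrt (one_sub_norm_sq_pos hz).le
  have hnum : ‖z - c • z - ((Real.sqrt (1 - ‖z‖ ^ 2) : ℝ) : ℂ) • (w - c • z)‖ ^ 2 =
      ‖1 - c‖ ^ 2 * ‖z‖ ^ 2 + (1 - ‖z‖ ^ 2) * ‖w - c • z‖ ^ 2 := by
    have h1 : z - c • z = (1 - c) • z := by rw [sub_smul, one_smul]
    have := norm_add_sq_eq_norm_sq_add_norm_sq_of_inner_eq_zero (𝕜 := ℂ) ((1 - c) • z)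
        (-((Real.sqrt (1 - ‖z‖ ^ 2) : ℝ) : ℂ) • (w - c • z))
        (by rw [inner_smul_right, inner_smul_left, horth]; simp)
    rw [neg_smul, ← sub_eq_add_neg, norm_neg] at this
    rw [h1, sq, this, norm_smul, norm_smul, Complex.norm_real,
      Real.norm_of_nonneg (Real.sqrt_nonneg _)]
    linear_combination (‖w - c • z‖ ^ 2) * hs
  have hcn : ‖c‖ ^ 2 = ‖x‖ ^ 2 / ‖z‖ ^ 4 := by
    rw [hc, norm_div, Complex.norm_real, Real.norm_of_nonneg (by positivity)]
    field_simp
  have hcre : c.re = x.re / ‖z‖ ^ 2 := by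
    rw [hc, Complex.div_ofReal_re]
  have hform : mobius z w = (1 - x)⁻¹ •
      (z - c • z - ((Real.sqrt (1 - ‖z‖ ^ 2) : ℝ) : ℂ) • (w - c • z)) := by
    simp only [mobius, h0, if_false, hwz, hzz, ← hc]
  rw [hform, norm_smul, mul_pow, hnum, hQ, norm_one_sub_sq c, hcn, hcre, norm_inv]
  have hx2 := norm_one_sub_sq x
  have hd : ‖1 - x‖ ^ 2 ≠ 0 := pow_ne_zero _ hne'
  rw [inv_pow, eq_sub_iff_add_eq, inv_mul_eq_div, ← add_div, div_eq_one_iff_eq hd, hx2]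
  field_simp
  ring

/-- The hyperbolic cosine of the Bergman distance. -/
def bergmanCosh {n : ℕ} (z w : En n) : ℝ :=
  ‖1 - inner ℂ z w‖ / Real.sqrt ((1 - ‖z‖ ^ 2) * (1 - ‖w‖ ^ 2))

lemma bergmanCosh_comm {n : ℕ} (z w : En n) : bergmanCosh z w = bergmanCosh w z := by
  have h : ‖1 - inner ℂ z w‖ = ‖1 - inner ℂ w z‖ := by
    rw [← RCLike.norm_conj (1 - inner ℂ w z)]
    simp
  rw [bergmanCosh, bergmanCosh, h, mul_comm]

lemma bergmanCosh_sq {n : ℕ} {z w : En n} (hz : ‖z‖ < 1) (hw : ‖w‖ < 1) :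
    bergmanCosh z w ^ 2 = ‖1 - inner ℂ z w‖ ^ 2 / ((1 - ‖z‖ ^ 2) * (1 - ‖w‖ ^ 2)) := by
  rw [bergmanCosh, div_pow, Real.sq_sqrt]
  exact (mul_pos (one_sub_norm_sq_pos hz) (one_sub_norm_sq_pos hw)).le

lemma bergmanCosh_nonneg {n : ℕ} (z w : En n) : 0 ≤ bergmanCosh z w := by
  unfold bergmanCosh; positivity

lemma norm_mobius_sq_lt_one {n : ℕ} {z w : En n} (hz : ‖z‖ < 1) (hw : ‖w‖ < 1) :
    ‖mobius z w‖ ^ 2 < 1 := by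
  rw [norm_mobius_sq hz hw]
  have := norm_pos_iff.mpr (one_sub_inner_ne_zero hz hw)
  have h1 := one_sub_norm_sq_pos hz
  have h2 := one_sub_norm_sq_pos hw
  have : 0 < (1 - ‖z‖ ^ 2) * (1 - ‖w‖ ^ 2) / ‖1 - inner ℂ z w‖ ^ 2 := by positivity
  linarith

lemma cosh_bergmanDist {n : ℕ} {z w : En n} (hz : ‖z‖ < 1) (hw : ‖w‖ < 1) :
    Real.cosh (bergmanDist z w) = bergmanCosh z w := by
  have hlt := norm_mobius_sq_lt_one hz hw
  set m := ‖mobius z w‖ with hm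
  have hm0 : 0 ≤ m := norm_nonneg _
  have hm1 : m < 1 := by nlinarith
  have hC : bergmanCosh z w ^ 2 = 1 / (1 - m ^ 2) := by
    rw [bergmanCosh_sq hz hw, hm, norm_mobius_sq hz hw]
    simp
  rw [← sq_eq_sq₀ (Real.cosh_pos _).le (bergmanCosh_nonneg z w), hC]
  have h2 : Real.cosh (2 * bergmanDist z w) = 2 * Real.cosh (bergmanDist z w) ^ 2 - 1 := by
    rw [Real.cosh_two_mul, Real.sinh_sq]; ring
  have h3 : 2 * bergmanDist z w = Real.log ((1 + m) / (1 - m)) := by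
    rw [bergmanDist, ← hm]; ring
  rw [h3, Real.cosh_log (by apply div_pos <;> linarith)] at h2
  have h4 : Real.cosh (bergmanDist z w) ^ 2 =
      (((1 + m) / (1 - m) + ((1 + m) / (1 - m))⁻¹) / 2 + 1) / 2 := by linarith
  rw [h4]
  have : 1 - m ≠ 0 := by linarith
  have : 1 + m ≠ 0 := by linarith
  have h5 : 1 - m ^ 2 ≠ 0 := by nlinarith
  field_simp
  ring

lemma bergmanDist_nonneg {n : ℕ} {z w : En n} (hz : ‖z‖ < 1) (hw : ‖w‖ < 1) :
    0 ≤ bergmanDist z w := by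
  have hlt := norm_mobius_sq_lt_one hz hw
  have hm0 : 0 ≤ ‖mobius z w‖ := norm_nonneg _
  have hm1 : ‖mobius z w‖ < 1 := by nlinarith
  refine mul_nonneg (by norm_num) (Real.log_nonneg ?_)
  rw [le_div_iff₀ (by linarith)]
  linarith

lemma bergmanDist_comm {n : ℕ} {z w : En n} (hz : ‖z‖ < 1) (hw : ‖w‖ < 1) :
    bergmanDist z w = bergmanDist w z := by
  have h : Real.cosh (bergmanDist z w) = Real.cosh (bergmanDist w z) := by
    rw [cosh_bergmanDist hz hw, cosh_bergmanDist hw hz, bergmanCosh_comm]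
  exact Real.cosh_strictMonoOn.injOn (bergmanDist_nonneg hz hw) (bergmanDist_nonneg hw hz) h

lemma bergmanDist_lt_iff {n : ℕ} {z w : En n} (hz : ‖z‖ < 1) (hw : ‖w‖ < 1) {s : ℝ}
    (hs : 0 < s) : bergmanDist z w < s ↔ bergmanCosh z w < Real.cosh s := by
  rw [← cosh_bergmanDist hz hw]
  exact (Real.cosh_strictMonoOn.lt_iff_lt (bergmanDist_nonneg hz hw) hs.le).symm

/-- Reverse Cauchy–Schwarz in the hyperboloid model. -/
lemma norm_one_sub_inner_le {n : ℕ} {x y z : En n} (hz : ‖z‖ < 1) :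
    ‖1 - inner ℂ x y‖ ≤ ‖1 - inner ℂ x z‖ * ‖1 - inner ℂ z y‖ / (1 - ‖z‖ ^ 2) +
      Real.sqrt (‖1 - inner ℂ x z‖ ^ 2 / (1 - ‖z‖ ^ 2) - (1 - ‖x‖ ^ 2)) *
      Real.sqrt (‖1 - inner ℂ z y‖ ^ 2 / (1 - ‖z‖ ^ 2) - (1 - ‖y‖ ^ 2)) := by
  have hρ := one_sub_norm_sq_pos hz
  set ρ := 1 - ‖z‖ ^ 2 with hρd
  have hρc : ((ρ : ℝ) : ℂ) ≠ 0 := by exact_mod_cast hρ.ne'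
  have hzz : (inner ℂ z z : ℂ) = 1 - (ρ : ℂ) := by
    rw [inner_self_eq_ofReal, hρd]; push_cast; ring
  have key : ∀ u v : En n, (1 - inner ℂ u z) * (1 - inner ℂ z v) / (ρ : ℂ) - (1 - inner ℂ u v) =
      inner ℂ (u - z) (v - z) + inner ℂ (u - z) z * inner ℂ z (v - z) / (ρ : ℂ) := by
    intro u v
    simp only [inner_sub_left, inner_sub_right, hzz]
    field_simp
    ring
  have keyn : ∀ u : En n, ‖1 - inner ℂ u z‖ ^ 2 / ρ - (1 - ‖u‖ ^ 2) =
      ‖u - z‖ ^ 2 + (‖inner ℂ (u - z) z‖ / Real.sqrt ρ) ^ 2 := by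
    intro u
    have h := key u u
    have e1 : (1 - inner ℂ u z) * (1 - inner ℂ z u) = ((‖1 - inner ℂ u z‖ ^ 2 : ℝ) : ℂ) := by
      have : (1 - inner ℂ z u) = conj (1 - inner ℂ u z) := by simp
      rw [this, Complex.mul_conj, Complex.normSq_eq_norm_sq]
    have e2 : inner ℂ (u - z) z * inner ℂ z (u - z) = ((‖inner ℂ (u - z) z‖ ^ 2 : ℝ) : ℂ) := by
      rw [← inner_conj_symm z (u - z), Complex.mul_conj, Complex.normSq_eq_norm_sq]
    rw [e1, e2, inner_self_eq_ofReal, inner_self_eq_ofReal] at h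
    rw [div_pow, Real.sq_sqrt hρ.le]
    exact_mod_cast h
  have hsym : ‖1 - inner ℂ z y‖ = ‖1 - inner ℂ y z‖ := by
    rw [← RCLike.norm_conj (1 - inner ℂ y z)]
    simp
  have hsym2 : ‖inner ℂ z (y - z)‖ = ‖inner ℂ (y - z) z‖ := norm_inner_symm _ _
  rw [hsym, keyn x, keyn y]
  have h1 : 1 - inner ℂ x y = (1 - inner ℂ x z) * (1 - inner ℂ z y) / (ρ : ℂ) -
      (inner ℂ (x - z) (y - z) + inner ℂ (x - z) z * inner ℂ z (y - z) / (ρ : ℂ)) := by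
    rw [← key x y]; ring
  have h2 : ‖inner ℂ (x - z) (y - z) + inner ℂ (x - z) z * inner ℂ z (y - z) / (ρ : ℂ)‖ ≤
      ‖x - z‖ * ‖y - z‖ + (‖inner ℂ (x - z) z‖ / Real.sqrt ρ) *
        (‖inner ℂ (y - z) z‖ / Real.sqrt ρ) := by
    refine (norm_add_le _ _).trans (add_le_add (norm_inner_le_norm _ _) (le_of_eq ?_))
    rw [norm_div, norm_mul, hsym2, Complex.norm_real, Real.norm_of_nonneg hρ.le, div_mul_div_comm,
      Real.mul_self_sqrt hρ.le]
  have h3 : ∀ a b c d : ℝ, a * b + c * d ≤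
      Real.sqrt (a ^ 2 + c ^ 2) * Real.sqrt (b ^ 2 + d ^ 2) := by
    intro a b c d
    rw [← Real.sqrt_mul (by positivity)]
    apply Real.le_sqrt_of_sq_le
    nlinarith [sq_nonneg (a * d - b * c)]
  rw [h1]
  refine (norm_sub_le _ _).trans (add_le_add (le_of_eq ?_) (h2.trans (h3 _ _ _ _)))
  rw [norm_div, norm_mul, Complex.norm_real, Real.norm_of_nonneg hρ.le, hsym]

lemma bergmanDist_triangle {n : ℕ} {x y z : En n} (hx : ‖x‖ < 1) (hy : ‖y‖ < 1) (hz : ‖z‖ < 1) :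
    bergmanDist x y ≤ bergmanDist x z + bergmanDist z y := by
  have h0 := add_nonneg (bergmanDist_nonneg hx hz) (bergmanDist_nonneg hz hy)
  rw [← abs_of_nonneg h0, ← abs_of_nonneg (bergmanDist_nonneg hx hy), ← Real.cosh_le_cosh,
    Real.cosh_add, ← Real.sqrt_sq (Real.sinh_nonneg_iff.mpr (bergmanDist_nonneg hx hz)),
    ← Real.sqrt_sq (Real.sinh_nonneg_iff.mpr (bergmanDist_nonneg hz hy)), Real.sinh_sq,
    Real.sinh_sq, cosh_bergmanDist hx hy, cosh_bergmanDist hx hz, cosh_bergmanDist hz hy,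
    bergmanCosh_sq hx hz, bergmanCosh_sq hz hy]
  have hρx := one_sub_norm_sq_pos hx
  have hρy := one_sub_norm_sq_pos hy
  have hρz := one_sub_norm_sq_pos hz
  have key := norm_one_sub_inner_le (x := x) (y := y) hz
  simp only [bergmanCosh]
  set X := ‖1 - inner ℂ x z‖
  set Y := ‖1 - inner ℂ z y‖
  set a := 1 - ‖x‖ ^ 2
  set b := 1 - ‖y‖ ^ 2
  set ρ := 1 - ‖z‖ ^ 2
  have e1 : X ^ 2 / (a * ρ) - 1 = (X ^ 2 / ρ - a) / a := by field_simp
  have e2 : Y ^ 2 / (ρ * b) - 1 = (Y ^ 2 / ρ - b) / b := by field_simp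
  rw [e1, e2, Real.sqrt_div' _ hρx.le, Real.sqrt_div' _ hρy.le, Real.sqrt_mul hρx.le,
    Real.sqrt_mul hρx.le, Real.sqrt_mul hρz.le, div_le_iff₀ (by positivity)]
  refine key.trans (le_of_eq ?_)
  have sa := Real.sqrt_pos.mpr hρx
  have sb := Real.sqrt_pos.mpr hρy
  have sr := Real.sqrt_pos.mpr hρz
  have : ρ = Real.sqrt ρ * Real.sqrt ρ := (Real.mul_self_sqrt hρz.le).symm
  have e3 : X * Y / ρ = X * Y / (Real.sqrt ρ * Real.sqrt ρ) := by rw [← this]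
  rw [e3]
  field_simp

lemma bergmanCosh_le_of_dist_lt {n : ℕ} {w a z : En n} (hw : ‖w‖ < 1) (ha : ‖a‖ < 1)
    (hz : ‖z‖ < 1) {R : ℝ} (h : bergmanDist z a < R) :
    bergmanCosh w a ≤ Real.exp R * bergmanCosh w z := by
  have hR : 0 ≤ R := (bergmanDist_nonneg hz ha).trans h.le
  have h1 : bergmanDist w a ≤ bergmanDist w z + R :=
    (bergmanDist_triangle hw ha hz).trans (by linarith)
  have h0 := bergmanDist_nonneg hw hz
  rw [← cosh_bergmanDist hw ha, ← cosh_bergmanDist hw hz]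
  calc Real.cosh (bergmanDist w a) ≤ Real.cosh (bergmanDist w z + R) := by
        rw [Real.cosh_le_cosh, abs_of_nonneg (bergmanDist_nonneg hw ha),
          abs_of_nonneg (by linarith)]
        exact h1
    _ ≤ Real.exp R * Real.cosh (bergmanDist w z) := by
        rw [Real.cosh_eq, Real.cosh_eq, neg_add, Real.exp_add, Real.exp_add]
        have : Real.exp (-R) ≤ Real.exp R := Real.exp_le_exp.mpr (by linarith)
        nlinarith [Real.exp_pos (-bergmanDist w z)]

lemma one_sub_norm_sq_le_of_dist_lt {n : ℕ} {a z : En n} (ha : ‖a‖ < 1)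
    (hz : ‖z‖ < 1) {R : ℝ} (h : bergmanDist z a < R) :
    1 - ‖z‖ ^ 2 ≤ Real.exp (2 * R) * (1 - ‖a‖ ^ 2) := by
  have h1 := bergmanCosh_le_of_dist_lt (w := 0) (by simp) ha hz h
  have hρa := one_sub_norm_sq_pos ha
  have hρz := one_sub_norm_sq_pos hz
  have h2 := pow_le_pow_left₀ (bergmanCosh_nonneg _ _) h1 2
  rw [mul_pow, bergmanCosh_sq (by simp) ha, bergmanCosh_sq (by simp) hz, ← Real.exp_nat_mul] at h2
  simp at h2
  rw [inv_eq_one_div, ← div_eq_mul_inv, div_le_div_iff₀ hρa hρz] at h2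
  linarith

lemma norm_one_sub_inner_le_of_dist_lt {n : ℕ} {w a z : En n} (hw : ‖w‖ < 1) (ha : ‖a‖ < 1)
    (hz : ‖z‖ < 1) {R : ℝ} (h : bergmanDist z a < R) :
    ‖1 - inner ℂ w a‖ ≤ Real.exp (2 * R) * ‖1 - inner ℂ w z‖ := by
  have h1 := bergmanCosh_le_of_dist_lt hw ha hz h
  have hρa := one_sub_norm_sq_pos ha
  have hρz := one_sub_norm_sq_pos hz
  have hρw := one_sub_norm_sq_pos hw
  have h2 := pow_le_pow_left₀ (bergmanCosh_nonneg _ _) h1 2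
  have h3 := one_sub_norm_sq_le_of_dist_lt hz ha (by rwa [bergmanDist_comm ha hz])
  rw [mul_pow, bergmanCosh_sq hw ha, bergmanCosh_sq hw hz, ← Real.exp_nat_mul] at h2
  rw [← pow_le_pow_iff_left₀ (norm_nonneg _) (by positivity) two_ne_zero, mul_pow]
  push_cast at h2
  set E := Real.exp (2 * R)
  set A := 1 - ‖a‖ ^ 2
  set Z := 1 - ‖z‖ ^ 2
  set W := 1 - ‖w‖ ^ 2
  rw [div_le_iff₀ (by positivity)] at h2
  refine h2.trans ?_
  have : E * (‖1 - inner ℂ w z‖ ^ 2 / (W * Z)) * (W * A) =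
      E * ‖1 - inner ℂ w z‖ ^ 2 * (A / Z) := by field_simp
  rw [this]
  have h4 : A / Z ≤ E := by rw [div_le_iff₀ hρz]; exact h3
  have hE : 0 < E := Real.exp_pos _
  calc E * ‖1 - inner ℂ w z‖ ^ 2 * (A / Z) ≤ E * ‖1 - inner ℂ w z‖ ^ 2 * E := by gcongr
    _ = _ := by ring

lemma isOpen_bergmanBall {n : ℕ} {a : En n} (ha : ‖a‖ < 1) {R : ℝ} (hR : 0 < R) :
    IsOpen (bergmanBall a R) := by
  have : bergmanBall a R = {z | ‖z‖ < 1} ∩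
      {z | ‖1 - inner ℂ a z‖ ^ 2 < Real.cosh R ^ 2 * ((1 - ‖a‖ ^ 2) * (1 - ‖z‖ ^ 2))} := by
    ext z
    simp only [bergmanBall, unitBall, mem_ball_zero_iff, Set.mem_ofPred_eq, Set.mem_inter_iff]
    refine and_congr_right fun hz => ?_
    rw [bergmanDist_lt_iff ha hz hR, ← pow_lt_pow_iff_left₀ (bergmanCosh_nonneg _ _)
      (Real.cosh_pos _).le two_ne_zero, bergmanCosh_sq ha hz, div_lt_iff₀]
    exact mul_pos (one_sub_norm_sq_pos ha) (one_sub_norm_sq_pos hz)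
  rw [this]
  refine (isOpen_lt (by fun_prop) (by fun_prop)).inter (isOpen_lt (by fun_prop) (by fun_prop))

end Geometry

section Volume

/-- The linear map scaling by `s` along the unit vector `e` and by `√s` on its orthogonal
complement. -/
def anisoDil {n : ℕ} (e : En n) (s : ℝ) : En n →ₗ[ℂ] En n :=
  ((Real.sqrt s : ℝ) : ℂ) •
    LinearMap.transvection ((((Real.sqrt s - 1 : ℝ)) : ℂ) • (innerSL ℂ e).toLinearMap) e

lemma anisoDil_apply {n : ℕ} (e : En n) (s : ℝ) (x : En n) :
    anisoDil e s x = ((Real.sqrt s : ℝ) : ℂ) •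
      (x + ((((Real.sqrt s - 1 : ℝ)) : ℂ) * inner ℂ e x) • e) := by
  simp [anisoDil, LinearMap.transvection.apply]

lemma inner_anisoDil {n : ℕ} {e : En n} (he : ‖e‖ = 1) {s : ℝ} (hs : 0 ≤ s) (x : En n) :
    inner ℂ e (anisoDil e s x) = (s : ℂ) * inner ℂ e x := by
  have h : ((Real.sqrt s : ℝ) : ℂ) * ((Real.sqrt s : ℝ) : ℂ) = (s : ℂ) := by
    exact_mod_cast Real.mul_self_sqrt hs
  rw [anisoDil_apply, inner_smul_right, inner_add_right, inner_smul_right, inner_self_eq_ofReal, he,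
    ← h]
  push_cast
  ring

lemma norm_anisoDil_sq {n : ℕ} {e : En n} (he : ‖e‖ = 1) {s : ℝ} (hs : 0 ≤ s) (x : En n) :
    ‖anisoDil e s x‖ ^ 2 = s * (‖x‖ ^ 2 - ‖inner ℂ e x‖ ^ 2) + s ^ 2 * ‖inner ℂ e x‖ ^ 2 := by
  have h : Real.sqrt s ^ 2 = s := Real.sq_sqrt hs
  rw [anisoDil_apply, norm_smul, mul_pow, Complex.norm_real,
    Real.norm_of_nonneg (Real.sqrt_nonneg _),
    h, @norm_add_sq ℂ]
  have h1 : RCLike.re (inner ℂ x (((((Real.sqrt s - 1 : ℝ)) : ℂ) * inner ℂ e x) • e)) =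
      (Real.sqrt s - 1) * ‖inner ℂ e x‖ ^ 2 := by
    rw [inner_smul_right, mul_assoc, ← inner_conj_symm x e, Complex.mul_conj,
      Complex.normSq_eq_norm_sq]
    norm_cast
  have h2 : ‖((((Real.sqrt s - 1 : ℝ)) : ℂ) * inner ℂ e x) • e‖ ^ 2 =
      (Real.sqrt s - 1) ^ 2 * ‖inner ℂ e x‖ ^ 2 := by
    rw [norm_smul, norm_mul, he, Complex.norm_real, Real.norm_eq_abs, mul_one, mul_pow, sq_abs]
  rw [h1, h2]
  linear_combination (s * ‖inner ℂ e x‖ ^ 2) * h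

lemma anisoDil_inv {n : ℕ} {e : En n} (he : ‖e‖ = 1) {s : ℝ} (hs : 0 < s) (x : En n) :
    anisoDil e s (anisoDil e s⁻¹ x) = x := by
  have h0 : ((Real.sqrt s : ℝ) : ℂ) ≠ 0 := by
    exact_mod_cast (Real.sqrt_pos.mpr hs).ne'
  have h : (s : ℂ) = ((Real.sqrt s : ℝ) : ℂ) * ((Real.sqrt s : ℝ) : ℂ) := by
    exact_mod_cast (Real.mul_self_sqrt hs.le).symm
  rw [anisoDil_apply e s, inner_anisoDil he (inv_nonneg.mpr hs.le), anisoDil_apply, Real.sqrt_inv]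
  push_cast
  rw [h, smul_add, smul_add, smul_add, smul_smul, smul_smul, smul_smul, smul_smul,
    add_assoc, ← add_smul,
    mul_inv_cancel₀ h0, one_smul]
  convert add_zero x using 2
  convert zero_smul ℂ e using 2
  field_simp
  ring

lemma volume_image_anisoDil {n : ℕ} {e : En n} (he : ‖e‖ = 1) {s : ℝ} (hs : 0 ≤ s)
    (A : Set (En n)) :
    volume (anisoDil e s '' A) = ENNReal.ofReal (s ^ (n + 1)) * volume A := by
  have h := Measure.addHaar_image_linearMap (volume : Measure (En n))
    ((anisoDil e s).restrictScalars ℝ) A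
  rw [LinearMap.coe_restrictScalars] at h
  rw [h, LinearMap.det_restrictScalars, Algebra.norm_complex_apply, anisoDil, LinearMap.det_smul,
    LinearMap.transvection.det, finrank_euclideanSpace, Fintype.card_fin]
  congr 2
  have h1 : (1 : ℂ) + (((((Real.sqrt s - 1 : ℝ)) : ℂ) • (innerSL ℂ e).toLinearMap) e) =
      ((Real.sqrt s : ℝ) : ℂ) := by
    have : (innerSL ℂ e).toLinearMap e = 1 := by
      simp [he]
    rw [LinearMap.smul_apply, this]
    push_cast
    simp
  rw [h1, ← pow_succ, ← Complex.ofReal_pow, Complex.normSq_ofReal, ← mul_pow,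
    Real.mul_self_sqrt hs, abs_of_nonneg (by positivity)]

lemma exists_unit_eq_smul {n : ℕ} (hn : 1 ≤ n) (a : En n) :
    ∃ e : En n, ‖e‖ = 1 ∧ a = ((‖a‖ : ℝ) : ℂ) • e := by
  by_cases h : a = 0
  · refine ⟨EuclideanSpace.single ⟨0, hn⟩ 1, by simp, by simp [h]⟩
  · have h0 : ((‖a‖ : ℝ) : ℂ) ≠ 0 := by exact_mod_cast (norm_pos_iff.mpr h).ne'
    refine ⟨(((‖a‖ : ℝ) : ℂ))⁻¹ • a, ?_, ?_⟩
    · rw [norm_smul, norm_inv, Complex.norm_real, norm_norm]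
      exact inv_mul_cancel₀ (norm_pos_iff.mpr h).ne'
    · rw [smul_smul, mul_inv_cancel₀ h0, one_smul]

/-- The Carleson type region `{z ∈ 𝔹ₙ : |1 - ⟨z,w⟩| < s}`. -/
def carlesonRegion {n : ℕ} (w : En n) (s : ℝ) : Set (En n) :=
  {z | ‖z‖ < 1 ∧ ‖1 - inner ℂ w z‖ < s}

lemma isOpen_carlesonRegion {n : ℕ} (w : En n) (s : ℝ) : IsOpen (carlesonRegion w s) := by
  have : carlesonRegion w s = {z | ‖z‖ < 1} ∩ {z | ‖1 - inner ℂ w z‖ < s} := rfl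
  rw [this]
  exact (isOpen_lt (by fun_prop) (by fun_prop)).inter (isOpen_lt (by fun_prop) (by fun_prop))

lemma one_sub_norm_le_norm_one_sub_inner {n : ℕ} {w z : En n} (hw : ‖w‖ < 1) :
    1 - ‖z‖ ≤ ‖1 - inner ℂ w z‖ := by
  have h1 : ‖inner ℂ w z‖ ≤ ‖w‖ * ‖z‖ := norm_inner_le_norm w z
  have h2 := norm_sub_norm_le (1 : ℂ) (inner ℂ w z)
  rw [norm_one] at h2
  nlinarith [norm_nonneg z]

lemma one_sub_norm_le_norm_one_sub_inner' {n : ℕ} {w z : En n} (hz : ‖z‖ < 1) :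
    1 - ‖w‖ ≤ ‖1 - inner ℂ w z‖ := by
  have h1 : ‖inner ℂ w z‖ ≤ ‖w‖ * ‖z‖ := norm_inner_le_norm w z
  have h2 := norm_sub_norm_le (1 : ℂ) (inner ℂ w z)
  rw [norm_one] at h2
  nlinarith [norm_nonneg w]

lemma volume_carlesonRegion_le {n : ℕ} (hn : 1 ≤ n) {w : En n} (hw : ‖w‖ < 1) {s : ℝ}
    (hs : 0 < s) :
    volume (carlesonRegion w s) ≤
      ENNReal.ofReal (s ^ (n + 1)) * volume (ball (0 : En n) 3) := by
  obtain ⟨e, he, hwe⟩ := exists_unit_eq_smul hn w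
  have hsub : carlesonRegion w s ⊆ (fun x => e + x) '' (anisoDil e s '' ball 0 3) := by
    rintro z ⟨hz, hzs⟩
    refine ⟨z - e, ⟨anisoDil e s⁻¹ (z - e), ?_, anisoDil_inv he hs _⟩, by simp⟩
    rw [mem_ball_zero_iff]
    have hin : inner ℂ w z = ((‖w‖ : ℝ) : ℂ) * inner ℂ e z := by
      conv_lhs => rw [hwe]
      rw [inner_smul_left, Complex.conj_ofReal]
    set x : ℂ := inner ℂ e z with hx
    have hxn : ‖x‖ ≤ 1 := by
      have := norm_inner_le_norm (𝕜 := ℂ) e z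
      rw [he, one_mul] at this
      exact this.trans hz.le
    have hsw : 1 - ‖w‖ < s := (one_sub_norm_le_norm_one_sub_inner' hz).trans_lt hzs
    have h1 : ‖1 - x‖ < 2 * s := by
      have : 1 - x = (1 - inner ℂ w z) + ((‖w‖ - 1 : ℝ) : ℂ) * x := by
        rw [hin]; push_cast; ring
      rw [this]
      refine (norm_add_le _ _).trans_lt ?_
      rw [norm_mul, Complex.norm_real, Real.norm_eq_abs, abs_of_neg (by linarith)]
      nlinarith [norm_nonneg x]
    have h2 : 1 - ‖x‖ ^ 2 ≤ 4 * s := by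
      have := norm_sub_norm_le (1 : ℂ) x
      rw [norm_one] at this
      nlinarith [norm_nonneg x]
    have h3 : inner ℂ e (z - e) = -(1 - x) := by
      rw [inner_sub_right, inner_self_eq_ofReal, he]; simp [hx]
    have h4 : ‖z - e‖ ^ 2 - ‖1 - x‖ ^ 2 = ‖z‖ ^ 2 - ‖x‖ ^ 2 := by
      rw [@norm_sub_sq ℂ, norm_one_sub_sq, he]
      have : RCLike.re (inner ℂ z e) = x.re := by
        rw [inner_re_symm]; rfl
      rw [this]
      ring
    have h5 := norm_anisoDil_sq he (inv_nonneg.mpr hs.le) (z - e)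
    rw [h3, norm_neg, h4] at h5
    have h6 : s⁻¹ * (‖z‖ ^ 2 - ‖x‖ ^ 2) ≤ 4 := by
      rw [inv_mul_le_iff₀ hs]
      nlinarith [norm_nonneg z]
    have h7 : s⁻¹ ^ 2 * ‖1 - x‖ ^ 2 ≤ 4 := by
      rw [inv_pow, inv_mul_le_iff₀ (by positivity)]
      nlinarith [norm_nonneg (1 - x)]
    nlinarith [norm_nonneg (anisoDil e s⁻¹ (z - e))]
  refine (measure_mono hsub).trans ?_
  rw [Set.image_add_left, measure_preimage_add, volume_image_anisoDil he hs.le]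

end Volume

section ForelliRudin

open scoped Pointwise

lemma volume_carlesonRegion_shell_le {n : ℕ} (hn : 1 ≤ n) :
    ∃ C > (0 : ℝ), ∀ w : En n, ‖w‖ < 1 → ∀ s h : ℝ, 0 < h → h ≤ s → s ≤ 2 →
      volume (carlesonRegion w s ∩ {z | 1 - h ≤ ‖z‖}) ≤ ENNReal.ofReal (C * s ^ n * h) := by
  set c₀ := (volume (ball (0 : En n) 3)).toReal with hc₀
  have hfin : volume (ball (0 : En n) 3) ≠ ∞ := measure_ball_lt_top.ne
  have hc : volume (ball (0 : En n) 3) = ENNReal.ofReal c₀ := (ENNReal.ofReal_toReal hfin).symm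
  have hc0 : 0 < c₀ := ENNReal.toReal_pos (measure_ball_pos _ _ (by norm_num)).ne' hfin
  have hn' : (1 : ℝ) ≤ n := by exact_mod_cast hn
  refine ⟨4 * 3 ^ (n + 1) * (8 * n) * c₀, by positivity, ?_⟩
  intro w hw s h hh hhs hs2
  have hs : 0 < s := hh.trans_le hhs
  by_cases hcase : 8 * n * h ≤ 1
  · set τ := 1 - h with hτ
    have hh1 : h ≤ 1 / 8 := by nlinarith
    have hτ0 : 0 < τ := by linarith
    have hτ1 : τ < 1 := by linarith
    set A := carlesonRegion w s ∩ {z | τ ≤ ‖z‖} with hA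
    have hAm : MeasurableSet A :=
      (isOpen_carlesonRegion w s).measurableSet.inter
        (isClosed_le continuous_const continuous_norm).measurableSet
    set J := ⌊s / (8 * n * h)⌋₊ + 1 with hJ
    have hJ1 : s / (8 * n * h) ≤ J := by
      rw [hJ]; push_cast; exact (Nat.lt_floor_add_one _).le
    have hJ2 : (J : ℝ) * h ≤ s / (8 * n) + h := by
      have : (⌊s / (8 * n * h)⌋₊ : ℝ) ≤ s / (8 * n * h) := Nat.floor_le (by positivity)
      calc (J : ℝ) * h ≤ (s / (8 * n * h) + 1) * h := by
            rw [hJ]; push_cast; gcongr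
        _ = s / (8 * n) + h := by field_simp
    have hpow : ∀ j < J, 1 - (J : ℝ) * h ≤ τ ^ j := by
      intro j hj
      have h1 := one_add_mul_le_pow (a := -h) (by linarith) j
      have h2 : (j : ℝ) ≤ J := by exact_mod_cast hj.le
      have h3 : 1 + -h = τ := by rw [hτ]; ring
      rw [h3] at h1
      nlinarith
    have hpow2 : ∀ j < J, (1 / 4 : ℝ) ≤ (τ ^ j) ^ (2 * n) := by
      intro j hj
      rw [← pow_mul]
      have h1 := one_add_mul_le_pow (a := -h) (by linarith) (j * (2 * n))
      have h2 : (j : ℝ) ≤ J := by exact_mod_cast hj.le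
      have h3 : 1 + -h = τ := by rw [hτ]; ring
      rw [h3] at h1
      push_cast at h1
      have h4 : 2 * n * (J * h) ≤ 2 * n * (s / (8 * n) + h) := by gcongr
      have h5 : 2 * n * (s / (8 * n) + h) = s / 4 + 2 * n * h := by field_simp; ring
      have h6 : (j : ℝ) * (2 * n) * h ≤ J * (2 * n) * h := by gcongr
      nlinarith
    have hdisj : Set.PairwiseDisjoint (↑(Finset.range J)) (fun j : ℕ => (τ ^ j) • A) := by
      have key : ∀ j : ℕ, ∀ z ∈ (τ ^ j) • A, τ ^ (j + 1) ≤ ‖z‖ ∧ ‖z‖ < τ ^ j := by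
        rintro j _ ⟨z, hz, rfl⟩
        simp only [norm_smul, norm_pow, Real.norm_of_nonneg hτ0.le]
        have hp := pow_pos hτ0 j
        refine ⟨?_, ?_⟩
        · rw [pow_succ]; exact mul_le_mul_of_nonneg_left hz.2 hp.le
        · have := hz.1.1; nlinarith
      have lt : ∀ i j : ℕ, i < j → Disjoint ((τ ^ i) • A) ((τ ^ j) • A) := by
        intro i j hij
        rw [Set.disjoint_left]
        intro z hi hj
        have h1 := (key i z hi).1
        have h2 := (key j z hj).2
        have h3 : τ ^ j ≤ τ ^ (i + 1) := pow_le_pow_of_le_one hτ0.le hτ1.le hij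
        linarith
      intro i _ j _ hij
      rcases lt_or_gt_of_ne hij with h | h
      · exact lt i j h
      · exact (lt j i h).symm
    have hsub : (⋃ j ∈ Finset.range J, (τ ^ j) • A) ⊆ carlesonRegion w (3 * s) := by
      intro z hz
      simp only [Set.mem_iUnion, Finset.mem_range] at hz
      obtain ⟨j, hj, z, hz, rfl⟩ := hz
      have hp := pow_pos hτ0 j
      have hp1 : τ ^ j ≤ 1 := pow_le_one₀ hτ0.le hτ1.le
      have hz1 := hz.1.1
      refine ⟨?_, ?_⟩
      · simp only [norm_smul, norm_pow, Real.norm_of_nonneg hτ0.le]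
        nlinarith [norm_nonneg z]
      · have e1 : inner ℂ w ((τ ^ j) • z) = ((τ ^ j : ℝ) : ℂ) * inner ℂ w z := by
          rw [← Complex.coe_smul, inner_smul_right]
        have e2 : 1 - inner ℂ w ((τ ^ j) • z) =
            (1 - inner ℂ w z) + ((1 - τ ^ j : ℝ) : ℂ) * inner ℂ w z := by
          rw [e1]; push_cast; ring
        have e3 : ‖inner ℂ w z‖ ≤ 1 := by
          refine (norm_inner_le_norm _ _).trans ?_
          nlinarith [norm_nonneg z, norm_nonneg w]
        change ‖1 - inner ℂ w ((τ ^ j) • z)‖ < 3 * s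
        rw [e2]
        refine (norm_add_le _ _).trans_lt ?_
        rw [norm_mul, Complex.norm_real, Real.norm_of_nonneg (by linarith)]
        have h1 := hpow j hj
        have h2 := hz.1.2
        have h3 : s / (8 * n) ≤ s := div_le_self hs.le (by linarith)
        have h4 : (1 - τ ^ j) * ‖inner ℂ w z‖ ≤ 1 - τ ^ j := mul_le_of_le_one_right (by linarith) e3
        linarith
    have hmeas := (measure_mono hsub).trans (volume_carlesonRegion_le hn hw (by positivity))
    rw [measure_biUnion_finset hdisj (fun j _ => hAm.const_smul₀ (τ ^ j))] at hmeas
    have hlow : (J : ℝ≥0∞) * (ENNReal.ofReal (1 / 4) * volume A) ≤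
        ∑ j ∈ Finset.range J, volume ((τ ^ j) • A) := by
      rw [← Finset.card_range J, ← nsmul_eq_mul, Finset.card_range]
      conv_lhs => rw [← Finset.card_range J]
      apply Finset.card_nsmul_le_sum
      intro j hj
      rw [Measure.addHaar_smul, finrank_real_of_complex, finrank_euclideanSpace, Fintype.card_fin]
      gcongr
      exact (hpow2 j (Finset.mem_range.mp hj)).trans (le_abs_self _)
    have hAfin : volume A ≠ ∞ := by
      refine ((measure_mono (Set.inter_subset_left.trans fun z hz => ?_)).trans_lt
        (measure_ball_lt_top (x := (0 : En n)) (r := 1))).ne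
      exact mem_ball_zero_iff.mpr hz.1
    have hfinal := hlow.trans hmeas
    rw [hc, ← ENNReal.ofReal_toReal hAfin, ← ENNReal.ofReal_natCast,
      ← ENNReal.ofReal_mul (by positivity), ← ENNReal.ofReal_mul (by positivity),
      ← ENNReal.ofReal_mul (by positivity), ENNReal.ofReal_le_ofReal_iff (by positivity)] at hfinal
    rw [← ENNReal.ofReal_toReal hAfin]
    apply ENNReal.ofReal_le_ofReal
    set v := (volume A).toReal with hv
    have hv0 : 0 ≤ v := ENNReal.toReal_nonneg
    have h7 : s / (8 * n * h) * (1 / 4 * v) ≤ (3 * s) ^ (n + 1) * c₀ :=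
      (mul_le_mul_of_nonneg_right hJ1 (by positivity)).trans hfinal
    have h8 : v = s / (8 * n * h) * (1 / 4 * v) * (4 * (8 * n * h) / s) := by field_simp
    rw [h8]
    calc _ ≤ (3 * s) ^ (n + 1) * c₀ * (4 * (8 * n * h) / s) := by gcongr
      _ = _ := by rw [mul_pow, pow_succ s]; field_simp
  · push Not at hcase
    refine (measure_mono Set.inter_subset_left).trans
      ((volume_carlesonRegion_le hn hw hs).trans ?_)
    rw [hc, ← ENNReal.ofReal_mul (by positivity)]
    apply ENNReal.ofReal_le_ofReal
    have h3 : (1 : ℝ) ≤ 3 ^ (n + 1) := one_le_pow₀ (by norm_num)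
    have h4 : s ≤ 2 * (8 * n * h) := by linarith
    calc s ^ (n + 1) * c₀ = s * (s ^ n * c₀) := by rw [pow_succ]; ring
      _ ≤ 2 * (8 * n * h) * (s ^ n * c₀) := by gcongr
      _ ≤ (4 * 3 ^ (n + 1)) * (8 * n * h) * (s ^ n * c₀) := by gcongr; linarith
      _ = _ := by ring

lemma setLIntegral_le_tsum {X : Type*} [MeasurableSpace X] {μ : Measure X} {Ω : Set X}
    (hΩ : MeasurableSet Ω) {A : ℕ → Set X} (hA : ∀ i, MeasurableSet (A i)) {F : X → ℝ≥0∞}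
    {G : ℕ → X → ℝ≥0∞} (hG : ∀ i, Measurable (G i))
    (h : ∀ z ∈ Ω, ∃ i, z ∈ A i ∧ F z ≤ G i z) :
    ∫⁻ z in Ω, F z ∂μ ≤ ∑' i, ∫⁻ z in A i, G i z ∂μ := by
  calc ∫⁻ z in Ω, F z ∂μ ≤ ∫⁻ z in Ω, ∑' i, (A i).indicator (G i) z ∂μ := by
        refine setLIntegral_mono' hΩ fun z hz => ?_
        obtain ⟨i, hi, hF⟩ := h z hz
        refine hF.trans ?_
        rw [← Set.indicator_of_mem hi (G i)]
        exact ENNReal.le_tsum i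
    _ ≤ ∫⁻ z, ∑' i, (A i).indicator (G i) z ∂μ := setLIntegral_le_lintegral _ _
    _ = ∑' i, ∫⁻ z in A i, G i z ∂μ := by
        rw [lintegral_tsum fun i => ((hG i).indicator (hA i)).aemeasurable]
        simp_rw [lintegral_indicator (hA _)]

lemma tsum_ofReal_geometric {D θ : ℝ} (hD : 0 ≤ D) (h0 : 0 ≤ θ) (h1 : θ < 1) :
    ∑' i : ℕ, ENNReal.ofReal (D * θ ^ i) = ENNReal.ofReal (D * (1 - θ)⁻¹) := by
  rw [← ENNReal.ofReal_tsum_of_nonneg (fun i => by positivity)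
    ((summable_geometric_of_lt_one h0 h1).mul_left D), tsum_mul_left,
    tsum_geometric_of_lt_one h0 h1]

lemma rpow_le_rpow_abs_mul {K x y : ℝ} (hK : 0 < K) (hy : 0 < y) (h1 : y ≤ K * x)
    (h2 : x ≤ K * y) (t : ℝ) : x ^ t ≤ K ^ |t| * y ^ t := by
  have hx : 0 < x := pos_of_mul_pos_right (hy.trans_le h1) hK.le
  have hd : 0 < x / y := by positivity
  have : x ^ t = (x / y) ^ t * y ^ t := by rw [← Real.mul_rpow hd.le hy.le]; field_simp
  rw [this]
  gcongr
  rcases le_total 0 t with ht | ht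
  · rw [abs_of_nonneg ht]
    exact Real.rpow_le_rpow hd.le (by rwa [div_le_iff₀ hy]) ht
  · rw [abs_of_nonpos ht, Real.rpow_neg hK.le, ← Real.inv_rpow hK.le]
    refine Real.rpow_le_rpow_of_nonpos (by positivity) ?_ ht
    rw [le_div_iff₀ hy, inv_mul_le_iff₀ hK]; exact h1

lemma lintegral_carlesonRegion_le {n : ℕ} (hn : 1 ≤ n) {t : ℝ} (ht : -1 < t) :
    ∃ C > (0 : ℝ), ∀ w : En n, ‖w‖ < 1 → ∀ s : ℝ, 0 < s →
      ∫⁻ z in carlesonRegion w s, ENNReal.ofReal ((1 - ‖z‖) ^ t) ≤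
        ENNReal.ofReal (C * s ^ (n + 1 + t)) := by
  obtain ⟨C, hC, hV⟩ := volume_carlesonRegion_shell_le hn
  set θ : ℝ := (1 / 2) ^ (1 + t) with hθ
  have hθ0 : 0 < θ := by positivity
  have hθ1 : θ < 1 := Real.rpow_lt_one (by norm_num) (by norm_num) (by linarith)
  have hθ2 : 0 < (1 - θ)⁻¹ := inv_pos.mpr (by linarith)
  refine ⟨2 ^ |t| * C * (1 - θ)⁻¹, by positivity, ?_⟩
  have small : ∀ w : En n, ‖w‖ < 1 → ∀ s : ℝ, 0 < s → s ≤ 2 →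
      ∫⁻ z in carlesonRegion w s, ENNReal.ofReal ((1 - ‖z‖) ^ t) ≤
        ENNReal.ofReal (2 ^ |t| * C * (1 - θ)⁻¹ * s ^ (n + 1 + t)) := by
    intro w hw s hs hs2
    have hpos : ∀ i : ℕ, 0 < (1 / 2 : ℝ) ^ i * s := fun i => by positivity
    refine (setLIntegral_le_tsum (A := fun i => carlesonRegion w s ∩
        {z | 1 - (1 / 2) ^ i * s ≤ ‖z‖})
      (G := fun i _ => ENNReal.ofReal (2 ^ |t| * ((1 / 2) ^ i * s) ^ t))
      (isOpen_carlesonRegion w s).measurableSet (fun i =>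
        (isOpen_carlesonRegion w s).measurableSet.inter
          (isClosed_le continuous_const continuous_norm).measurableSet)
      (fun i => measurable_const) ?_).trans ?_
    · intro z hz
      have hx0 : 0 < (1 - ‖z‖) / s := div_pos (by linarith [hz.1]) hs
      have hx1 : (1 - ‖z‖) / s ≤ 1 := by
        rw [div_le_one hs]
        exact (one_sub_norm_le_norm_one_sub_inner hw).trans hz.2.le
      obtain ⟨i, hi1, hi2⟩ := exists_nat_pow_near_of_lt_one hx0 hx1
        (by norm_num : (0 : ℝ) < 1 / 2) (by norm_num)
      rw [lt_div_iff₀ hs] at hi1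
      rw [div_le_iff₀ hs] at hi2
      refine ⟨i, ⟨hz, ?_⟩, ENNReal.ofReal_le_ofReal ?_⟩
      · change 1 - (1 / 2 : ℝ) ^ i * s ≤ ‖z‖
        linarith
      · refine rpow_le_rpow_abs_mul two_pos (hpos i) ?_ ?_ t
        · rw [pow_succ] at hi1; linarith
        · linarith [hpos i]
    · have hb : ∀ i : ℕ, ∫⁻ _ in carlesonRegion w s ∩ {z | 1 - (1 / 2) ^ i * s ≤ ‖z‖},
          ENNReal.ofReal (2 ^ |t| * ((1 / 2) ^ i * s) ^ t) ≤
          ENNReal.ofReal ((2 ^ |t| * C * s ^ (n + 1 + t)) * θ ^ i) := by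
        intro i
        rw [setLIntegral_const]
        have h1 : (1 / 2 : ℝ) ^ i * s ≤ s :=
          mul_le_of_le_one_left hs.le (pow_le_one₀ (by norm_num) (by norm_num))
        refine (mul_le_mul_right (hV w hw s _ (hpos i) h1 hs2) _).trans ?_
        rw [← ENNReal.ofReal_mul (by positivity)]
        apply ENNReal.ofReal_le_ofReal (le_of_eq _)
        have e1 : ((1 / 2 : ℝ) ^ i * s) ^ t * ((1 / 2) ^ i * s) = ((1 / 2) ^ i * s) ^ (1 + t) := by
          rw [add_comm, Real.rpow_add_one (hpos i).ne']
        have e2 : ((1 / 2 : ℝ) ^ i * s) ^ (1 + t) = θ ^ i * s ^ (1 + t) := by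
          rw [Real.mul_rpow (by positivity) hs.le, hθ, ← Real.rpow_natCast, ← Real.rpow_natCast,
            ← Real.rpow_mul (by norm_num), ← Real.rpow_mul (by norm_num), mul_comm (i : ℝ)]
        have e3 : s ^ (n + 1 + t) = s ^ n * s ^ (1 + t) := by
          rw [add_assoc, Real.rpow_add hs, Real.rpow_natCast]
        rw [e3]
        linear_combination (2 ^ |t| * C * s ^ n) * (e1.trans e2)
      refine (ENNReal.tsum_le_tsum hb).trans (le_of_eq ?_)
      rw [tsum_ofReal_geometric (by positivity) hθ0.le hθ1]
      congr 1
      ring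
  intro w hw s hs
  rcases le_total s 2 with h | h
  · exact small w hw s hs h
  · have hsub : carlesonRegion w s ⊆ carlesonRegion w 2 := by
      intro z hz
      refine ⟨hz.1, (norm_sub_le _ _).trans_lt ?_⟩
      have := norm_inner_le_norm (𝕜 := ℂ) w z
      rw [norm_one]
      nlinarith [norm_nonneg w, norm_nonneg z, hz.1]
    refine (lintegral_mono_set hsub).trans ((small w hw 2 (by norm_num) le_rfl).trans ?_)
    apply ENNReal.ofReal_le_ofReal
    have h0 : (0 : ℝ) ≤ n := Nat.cast_nonneg n
    gcongr
    linarith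

/-- The Forelli–Rudin upper estimate. -/
lemma lintegral_forelliRudin_le {n : ℕ} (hn : 1 ≤ n) {t c : ℝ} (ht : -1 < t) (hc : 0 < c) :
    ∃ C > (0 : ℝ), ∀ w : En n, ‖w‖ < 1 →
      ∫⁻ z in ball (0 : En n) 1, ENNReal.ofReal
          ((1 - ‖z‖ ^ 2) ^ t * ‖1 - inner ℂ w z‖ ^ (-(n + 1 + t + c))) ≤
        ENNReal.ofReal (C * (1 - ‖w‖ ^ 2) ^ (-c)) := by
  obtain ⟨C, hC, hV⟩ := lintegral_carlesonRegion_le hn ht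
  have h0 : (0 : ℝ) ≤ n := Nat.cast_nonneg n
  set θ : ℝ := 2 ^ (-c) with hθ
  have hθ0 : 0 < θ := by positivity
  have hθ1 : θ < 1 := Real.rpow_lt_one_of_one_lt_of_neg (by norm_num) (by linarith)
  have hθ2 : 0 < (1 - θ)⁻¹ := inv_pos.mpr (by linarith)
  set m : ℝ := n + 1 + t + c with hm
  set D : ℝ := 2 ^ |t| * C * 2 ^ (n + 1 + t) with hD
  refine ⟨2 ^ |-c| * (D * (1 - θ)⁻¹), by positivity, ?_⟩
  intro w hw
  set ρ := 1 - ‖w‖ with hρ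
  have hρ0 : 0 < ρ := by linarith
  have hpos : ∀ i : ℕ, 0 < (2 : ℝ) ^ i * ρ := fun i => by positivity
  refine (setLIntegral_le_tsum (A := fun i => carlesonRegion w (2 ^ (i + 1) * ρ))
      (G := fun i z => ENNReal.ofReal (2 ^ |t| * (2 ^ i * ρ) ^ (-m)) *
        ENNReal.ofReal ((1 - ‖z‖) ^ t))
      measurableSet_ball (fun i => (isOpen_carlesonRegion w _).measurableSet)
      (fun i => by fun_prop) ?_).trans ?_
  · intro z hz
    rw [mem_ball_zero_iff] at hz
    have hy : 1 ≤ ‖1 - inner ℂ w z‖ / ρ := by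
      rw [le_div_iff₀ hρ0, one_mul]
      exact one_sub_norm_le_norm_one_sub_inner' hz
    obtain ⟨i, hi1, hi2⟩ := exists_nat_pow_near hy (by norm_num : (1 : ℝ) < 2)
    rw [le_div_iff₀ hρ0] at hi1
    rw [div_lt_iff₀ hρ0] at hi2
    refine ⟨i, ⟨hz, hi2⟩, ?_⟩
    rw [← ENNReal.ofReal_mul (by positivity)]
    apply ENNReal.ofReal_le_ofReal
    have h1 : (1 - ‖z‖ ^ 2) ^ t ≤ 2 ^ |t| * (1 - ‖z‖) ^ t := by
      apply rpow_le_rpow_abs_mul two_pos (by linarith) <;> nlinarith [norm_nonneg z]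
    have h2 : ‖1 - inner ℂ w z‖ ^ (-m) ≤ (2 ^ i * ρ) ^ (-m) :=
      Real.rpow_le_rpow_of_nonpos (hpos i) hi1 (by rw [hm]; linarith)
    have h3 : 0 ≤ (1 - ‖z‖) ^ t := Real.rpow_nonneg (by linarith) _
    calc _ ≤ (2 ^ |t| * (1 - ‖z‖) ^ t) * (2 ^ i * ρ) ^ (-m) := by gcongr
      _ = _ := by ring
  · have hb : ∀ i : ℕ, ∫⁻ z in carlesonRegion w (2 ^ (i + 1) * ρ),
        ENNReal.ofReal (2 ^ |t| * (2 ^ i * ρ) ^ (-m)) * ENNReal.ofReal ((1 - ‖z‖) ^ t) ≤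
        ENNReal.ofReal ((D * ρ ^ (-c)) * θ ^ i) := by
      intro i
      rw [lintegral_const_mul _ (by fun_prop)]
      refine (mul_le_mul_right (hV w hw (2 ^ (i + 1) * ρ) (by positivity)) _).trans ?_
      rw [← ENNReal.ofReal_mul (by positivity)]
      apply ENNReal.ofReal_le_ofReal (le_of_eq _)
      have e1 : (2 ^ (i + 1) * ρ : ℝ) ^ (n + 1 + t) =
          2 ^ (n + 1 + t) * (2 ^ i * ρ) ^ (n + 1 + t) := by
        rw [← Real.mul_rpow (by norm_num) (hpos i).le, pow_succ]; ring_nf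
      have e2 : (2 ^ i * ρ : ℝ) ^ (-m) * (2 ^ i * ρ) ^ (n + 1 + t) = ρ ^ (-c) * θ ^ i := by
        rw [← Real.rpow_add (hpos i), Real.mul_rpow (by positivity) hρ0.le, mul_comm]
        have : -m + (n + 1 + t) = -c := by rw [hm]; ring
        rw [this, hθ, ← Real.rpow_natCast, ← Real.rpow_natCast,
            ← Real.rpow_mul (by norm_num), ← Real.rpow_mul (by norm_num), mul_comm (i : ℝ)]
      rw [e1, hD]
      linear_combination (2 ^ |t| * C * 2 ^ (n + 1 + t)) * e2
    refine (ENNReal.tsum_le_tsum hb).trans ?_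
    rw [tsum_ofReal_geometric (by positivity) hθ0.le hθ1]
    apply ENNReal.ofReal_le_ofReal
    have h1 : ρ ^ (-c) ≤ 2 ^ |-c| * (1 - ‖w‖ ^ 2) ^ (-c) := by
      apply rpow_le_rpow_abs_mul two_pos (one_sub_norm_sq_pos hw) <;> nlinarith [norm_nonneg w]
    calc _ ≤ D * (2 ^ |-c| * (1 - ‖w‖ ^ 2) ^ (-c)) * (1 - θ)⁻¹ := by gcongr
      _ = _ := by ring

end ForelliRudin

section SeparatedSequences

lemma mem_bergmanBall_iff {n : ℕ} {a z : En n} {s : ℝ} :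
    z ∈ bergmanBall a s ↔ ‖z‖ < 1 ∧ bergmanDist a z < s := by
  rw [bergmanBall, Set.mem_ofPred_eq, unitBall, mem_ball_zero_iff]

lemma bergmanBall_subset_ball {n : ℕ} (a : En n) (s : ℝ) : bergmanBall a s ⊆ ball 0 1 :=
  fun _ hz => hz.1

lemma volume_bergmanBall_ge {n : ℕ} (hn : 1 ≤ n) {s : ℝ} (hs : 0 < s) :
    ∃ c > (0 : ℝ), ∀ a : En n, ‖a‖ < 1 →
      ENNReal.ofReal (c * (1 - ‖a‖ ^ 2) ^ (n + 1)) ≤ volume (bergmanBall a s) := by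
  set κ := Real.cosh s ^ 2 with hκ
  have hc1 : 1 < Real.cosh s := Real.one_lt_cosh.mpr hs.ne'
  have hκ1 : 1 < κ := by nlinarith
  set η := (κ - 1) / (7 * κ) with hη
  have hη0 : 0 < η := by apply div_pos <;> linarith
  have hηκ : 7 * κ * η = κ - 1 := by rw [hη]; field_simp
  have hη1 : η < 1 / 7 := by nlinarith
  have hfin : volume (ball (0 : En n) η) ≠ ∞ := measure_ball_lt_top.ne
  refine ⟨(volume (ball (0 : En n) η)).toReal,
    ENNReal.toReal_pos (measure_ball_pos _ _ hη0).ne' hfin, fun a ha => ?_⟩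
  obtain ⟨e, he, hae⟩ := exists_unit_eq_smul hn a
  set ρ := 1 - ‖a‖ ^ 2 with hρ
  have hρ0 : 0 < ρ := one_sub_norm_sq_pos ha
  have hρ1 : ρ ≤ 1 := by nlinarith [norm_nonneg a]
  have hsub : (fun u => a + u) '' (anisoDil e ρ '' ball 0 η) ⊆ bergmanBall a s := by
    rintro _ ⟨_, ⟨x, hx, rfl⟩, rfl⟩
    rw [mem_ball_zero_iff] at hx
    set u := anisoDil e ρ x with hu
    have hi : ‖inner ℂ e x‖ ≤ ‖x‖ := by
      simpa [he] using norm_inner_le_norm (𝕜 := ℂ) e x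
    have hau : ‖inner ℂ a u‖ ≤ ρ * η := by
      rw [hae, inner_smul_left, norm_mul, hu, inner_anisoDil he hρ0.le, norm_mul]
      simp only [RCLike.norm_conj, Complex.norm_real, norm_norm, Real.norm_of_nonneg hρ0.le]
      have : ‖a‖ * (ρ * ‖inner ℂ e x‖) ≤ 1 * (ρ * η) := by gcongr; linarith
      linarith
    have huu : ‖u‖ ^ 2 ≤ ρ * η ^ 2 := by
      rw [hu, norm_anisoDil_sq he hρ0.le]
      have h1 : ‖x‖ ^ 2 ≤ η ^ 2 := by gcongr
      have h2 : 0 ≤ ρ * (1 - ρ) * ‖inner ℂ e x‖ ^ 2 := by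
        have : 0 ≤ 1 - ρ := by linarith
        positivity
      nlinarith
    have hre : |(inner ℂ a u : ℂ).re| ≤ ρ * η := (Complex.abs_re_le_norm _).trans hau
    have hnorm : ‖a + u‖ ^ 2 = ‖a‖ ^ 2 + 2 * (inner ℂ a u : ℂ).re + ‖u‖ ^ 2 :=
      norm_add_sq (𝕜 := ℂ) a u
    have hw1 : ρ * (1 - 2 * η - η ^ 2) ≤ 1 - ‖a + u‖ ^ 2 := by
      have := (abs_le.mp hre).2
      rw [hnorm]; nlinarith
    have hpos : 0 < 1 - 2 * η - η ^ 2 := by nlinarith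
    have hw2 : 0 < 1 - ‖a + u‖ ^ 2 := (mul_pos hρ0 hpos).trans_le hw1
    have hw : ‖a + u‖ < 1 := by nlinarith [norm_nonneg (a + u)]
    have hin : ‖1 - inner ℂ a (a + u)‖ ≤ ρ * (1 + η) := by
      rw [inner_add_right, inner_self_eq_ofReal]
      have : (1 : ℂ) - (((‖a‖ ^ 2 : ℝ) : ℂ) + inner ℂ a u) = (ρ : ℂ) - inner ℂ a u := by
        rw [hρ]; push_cast; ring
      rw [this]
      refine (norm_sub_le _ _).trans ?_
      rw [Complex.norm_real, Real.norm_of_nonneg hρ0.le]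
      linarith
    refine mem_bergmanBall_iff.mpr ⟨hw, (bergmanDist_lt_iff ha hw hs).mpr ?_⟩
    have hprod : 0 < ρ * (1 - ‖a + u‖ ^ 2) := mul_pos hρ0 hw2
    rw [bergmanCosh, div_lt_iff₀ (Real.sqrt_pos.mpr hprod)]
    refine lt_of_pow_lt_pow_left₀ 2 (by positivity) ?_
    rw [mul_pow, Real.sq_sqrt hprod.le, ← hκ]
    have h1 : ‖1 - inner ℂ a (a + u)‖ ^ 2 ≤ (ρ * (1 + η)) ^ 2 := by gcongr
    have h2 : κ * (ρ * (ρ * (1 - 2 * η - η ^ 2))) ≤ κ * (ρ * (1 - ‖a + u‖ ^ 2)) := by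
      have : 0 < κ := by linarith
      gcongr
    have h3 : (1 + η) ^ 2 < κ * (1 - 2 * η - η ^ 2) := by
      have h5 : 0 < 5 * κ - κ * η - 2 - η := by
        have : κ * η < κ * (1 / 7) := mul_lt_mul_of_pos_left hη1 (by linarith)
        linarith
      linarith [mul_pos hη0 h5]
    have h4 : (ρ * (1 + η)) ^ 2 < κ * (ρ * (ρ * (1 - 2 * η - η ^ 2))) := by
      linarith [mul_lt_mul_of_pos_left h3 (mul_pos hρ0 hρ0)]
    linarith
  refine le_trans (le_of_eq ?_) (measure_mono hsub)
  rw [Set.image_add_left, measure_preimage_add, volume_image_anisoDil he hρ0.le, mul_comm,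
    ENNReal.ofReal_mul (by positivity), ENNReal.ofReal_toReal hfin]

lemma IsSeparated.pairwise_disjoint {n : ℕ} {a : ℕ → En n} {ε : ℝ} (h : IsSeparated a ε) :
    Pairwise (Function.onFun Disjoint fun k => bergmanBall (a k) (ε / 2)) := by
  intro i j hij
  rw [Function.onFun, Set.disjoint_left]
  intro z hi hj
  rw [mem_bergmanBall_iff] at hi hj
  have hai := mem_ball_zero_iff.mp (h.1 i)
  have haj := mem_ball_zero_iff.mp (h.1 j)
  have h1 := bergmanDist_triangle hai haj hi.1
  rw [bergmanDist_comm hi.1 haj] at h1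
  linarith [h.2 i j hij]

lemma sum_kernel_le {n : ℕ} (hn : 1 ≤ n) {ε γ b : ℝ} (hε : 0 < ε) (hγ : 0 < γ)
    (hb : γ + n < b) :
    ∃ C > (0 : ℝ), ∀ a : ℕ → En n, IsSeparated a ε → ∀ (F : Finset ℕ) (w : En n), ‖w‖ < 1 →
      ∑ k ∈ F, (1 - ‖a k‖ ^ 2) ^ (b - γ) * ‖1 - inner ℂ w (a k)‖ ^ (-b) ≤
        C * (1 - ‖w‖ ^ 2) ^ (-γ) := by
  set t : ℝ := b - γ - n - 1 with ht
  have hb0 : 0 < b := by have : (0 : ℝ) ≤ n := Nat.cast_nonneg n; linarith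
  obtain ⟨c, hc, hvol⟩ := volume_bergmanBall_ge hn (half_pos hε)
  obtain ⟨C, hC, hFR⟩ := lintegral_forelliRudin_le hn (t := t) (by rw [ht]; linarith) hγ
  set K := Real.exp (2 * (ε / 2)) with hK
  have hK0 : 0 < K := Real.exp_pos _
  set D := K ^ |t| * K ^ b with hD
  have hD0 : 0 < D := by positivity
  refine ⟨D * C / c, by positivity, fun a ha F w hw => ?_⟩
  have hexp : (n : ℝ) + 1 + t + γ = b := by rw [ht]; ring
  rw [hexp] at hFR
  set f : En n → ℝ := fun z => (1 - ‖z‖ ^ 2) ^ t * ‖1 - inner ℂ w z‖ ^ (-b) with hf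
  have hterm : ∀ k, ENNReal.ofReal
      (c * ((1 - ‖a k‖ ^ 2) ^ (b - γ) * ‖1 - inner ℂ w (a k)‖ ^ (-b))) ≤
      ∫⁻ z in bergmanBall (a k) (ε / 2), ENNReal.ofReal D * ENNReal.ofReal (f z) := by
    intro k
    have hak := mem_ball_zero_iff.mp (ha.1 k)
    have hρ := one_sub_norm_sq_pos hak
    have e1 : c * ((1 - ‖a k‖ ^ 2) ^ (b - γ) * ‖1 - inner ℂ w (a k)‖ ^ (-b)) =
        ((1 - ‖a k‖ ^ 2) ^ t * ‖1 - inner ℂ w (a k)‖ ^ (-b)) *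
          (c * (1 - ‖a k‖ ^ 2) ^ (n + 1)) := by
      have : b - γ = t + (n + 1 : ℕ) := by rw [ht]; push_cast; ring
      rw [this, Real.rpow_add_natCast hρ.ne']; ring
    rw [e1, ENNReal.ofReal_mul (by positivity)]
    refine (mul_le_mul_right (hvol (a k) hak) _).trans ?_
    rw [← setLIntegral_const]
    refine setLIntegral_mono' (isOpen_bergmanBall hak (half_pos hε)).measurableSet fun z hz => ?_
    rw [← ENNReal.ofReal_mul hD0.le]
    apply ENNReal.ofReal_le_ofReal
    rw [mem_bergmanBall_iff] at hz
    have hz' : bergmanDist z (a k) < ε / 2 := by rw [bergmanDist_comm hz.1 hak]; exact hz.2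
    have h1 : (1 - ‖a k‖ ^ 2) ^ t ≤ K ^ |t| * (1 - ‖z‖ ^ 2) ^ t :=
      rpow_le_rpow_abs_mul hK0 (one_sub_norm_sq_pos hz.1)
        (one_sub_norm_sq_le_of_dist_lt hak hz.1 hz')
        (one_sub_norm_sq_le_of_dist_lt hz.1 hak hz.2) t
    have h2 : ‖1 - inner ℂ w z‖ ≤ K * ‖1 - inner ℂ w (a k)‖ :=
      norm_one_sub_inner_le_of_dist_lt hw hz.1 hak hz.2
    have hwz : 0 < ‖1 - inner ℂ w z‖ := norm_pos_iff.mpr (one_sub_inner_ne_zero hw hz.1)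
    have hwa : 0 < ‖1 - inner ℂ w (a k)‖ := norm_pos_iff.mpr (one_sub_inner_ne_zero hw hak)
    have h3 : ‖1 - inner ℂ w (a k)‖ ^ (-b) ≤ K ^ b * ‖1 - inner ℂ w z‖ ^ (-b) := by
      have := Real.rpow_le_rpow_of_nonpos hwz h2 (neg_nonpos.mpr hb0.le)
      rw [Real.mul_rpow hK0.le hwa.le, Real.rpow_neg hK0.le] at this
      rwa [inv_mul_le_iff₀ (by positivity)] at this
    have h4 : 0 ≤ (1 - ‖z‖ ^ 2) ^ t := Real.rpow_nonneg (one_sub_norm_sq_pos hz.1).le _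
    calc _ ≤ (K ^ |t| * (1 - ‖z‖ ^ 2) ^ t) * (K ^ b * ‖1 - inner ℂ w z‖ ^ (-b)) := by gcongr
      _ = D * f z := by rw [hD, hf]; ring
  have hpos : ∀ k, 0 ≤ c * ((1 - ‖a k‖ ^ 2) ^ (b - γ) * ‖1 - inner ℂ w (a k)‖ ^ (-b)) := by
    intro k
    have := one_sub_norm_sq_pos (mem_ball_zero_iff.mp (ha.1 k))
    positivity
  have hmain : ENNReal.ofReal
      (c * ∑ k ∈ F, (1 - ‖a k‖ ^ 2) ^ (b - γ) * ‖1 - inner ℂ w (a k)‖ ^ (-b)) ≤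
      ENNReal.ofReal (D * (C * (1 - ‖w‖ ^ 2) ^ (-γ))) := by
    rw [Finset.mul_sum, ENNReal.ofReal_sum_of_nonneg fun k _ => hpos k]
    refine (Finset.sum_le_sum fun k _ => hterm k).trans ?_
    rw [← lintegral_biUnion_finset (fun i _ j _ hij => ha.pairwise_disjoint hij)
      (fun k _ => (isOpen_bergmanBall (mem_ball_zero_iff.mp (ha.1 k)) (half_pos hε)).measurableSet)]
    refine (lintegral_mono_set (t := ball 0 1)
      (Set.iUnion₂_subset fun k _ => bergmanBall_subset_ball _ _)).trans ?_
    rw [lintegral_const_mul' _ _ ENNReal.ofReal_ne_top, ENNReal.ofReal_mul hD0.le]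
    gcongr
    exact hFR w hw
  have hw0 := one_sub_norm_sq_pos hw
  rw [ENNReal.ofReal_le_ofReal_iff (by positivity)] at hmain
  rw [div_mul_eq_mul_div, le_div_iff₀ hc]
  linarith

open scoped Classical in
lemma card_overlap_le {n : ℕ} (hn : 1 ≤ n) {ε δ : ℝ} (hε : 0 < ε) :
    ∃ N > (0 : ℝ), ∀ a : ℕ → En n, IsSeparated a ε → ∀ (F : Finset ℕ) (z : En n),
      ((F.filter fun k => z ∈ bergmanBall (a k) δ).card : ℝ) ≤ N := by
  set b : ℝ := n + 2 with hb
  have h0 : (0 : ℝ) ≤ n := Nat.cast_nonneg n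
  obtain ⟨C, hC, hsum⟩ := sum_kernel_le hn hε one_pos (b := b) (by rw [hb]; linarith)
  set K := Real.exp (2 * δ) with hK
  have hK0 : 0 < K := Real.exp_pos _
  refine ⟨C * K ^ (b - 1) * K ^ b, by positivity, fun a ha F z => ?_⟩
  by_cases hz : ‖z‖ < 1
  · set F' := F.filter fun k => z ∈ bergmanBall (a k) δ with hF'
    have hρ := one_sub_norm_sq_pos hz
    have hle := hsum a ha F' z hz
    have hterm : ∀ k ∈ F', K⁻¹ ^ (b - 1) * K ^ (-b) * (1 - ‖z‖ ^ 2) ^ (-1 : ℝ) ≤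
        (1 - ‖a k‖ ^ 2) ^ (b - 1) * ‖1 - inner ℂ z (a k)‖ ^ (-b) := by
      intro k hk
      have hkz := mem_bergmanBall_iff.mp (Finset.mem_filter.mp hk).2
      have hak := mem_ball_zero_iff.mp (ha.1 k)
      have hz' : bergmanDist z (a k) < δ := by rw [bergmanDist_comm hz hak]; exact hkz.2
      have h1 := one_sub_norm_sq_le_of_dist_lt hak hz hz'
      have h2 := norm_one_sub_inner_le_of_dist_lt hz hak hz hz'
      have h3 : ‖1 - inner ℂ z z‖ = 1 - ‖z‖ ^ 2 := by
        rw [inner_self_eq_ofReal, ← Complex.ofReal_one, ← Complex.ofReal_sub, Complex.norm_real,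
          Real.norm_of_nonneg hρ.le]
      rw [h3] at h2
      have h4 : 0 < ‖1 - inner ℂ z (a k)‖ := norm_pos_iff.mpr (one_sub_inner_ne_zero hz hak)
      have h5 : (K⁻¹ * (1 - ‖z‖ ^ 2)) ^ (b - 1) ≤ (1 - ‖a k‖ ^ 2) ^ (b - 1) :=
        Real.rpow_le_rpow (by positivity) (by rwa [inv_mul_le_iff₀ hK0]) (by linarith)
      have h6 : (K * (1 - ‖z‖ ^ 2)) ^ (-b) ≤ ‖1 - inner ℂ z (a k)‖ ^ (-b) :=
        Real.rpow_le_rpow_of_nonpos h4 h2 (by linarith)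
      refine le_trans (le_of_eq ?_) (mul_le_mul h5 h6 (by positivity)
        (Real.rpow_nonneg (one_sub_norm_sq_pos hak).le _))
      rw [Real.mul_rpow (by positivity) hρ.le, Real.mul_rpow hK0.le hρ.le]
      have : (1 - ‖z‖ ^ 2) ^ (-1 : ℝ) = (1 - ‖z‖ ^ 2) ^ (b - 1) * (1 - ‖z‖ ^ 2) ^ (-b) := by
        rw [← Real.rpow_add hρ]; congr 1; ring
      rw [this]; ring
    have hcard := (Finset.card_nsmul_le_sum F' _ _ hterm).trans hle
    rw [nsmul_eq_mul] at hcard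
    have hm : 0 < (1 - ‖z‖ ^ 2) ^ (-1 : ℝ) := by positivity
    rw [← mul_assoc] at hcard
    have h7 := le_of_mul_le_mul_right hcard hm
    rw [Real.inv_rpow hK0.le, Real.rpow_neg hK0.le, ← mul_assoc, ← div_eq_mul_inv,
      ← div_eq_mul_inv, div_div, div_le_iff₀ (by positivity)] at h7
    linarith
  · rw [Finset.filter_false_of_mem fun k _ hk => hz (mem_bergmanBall_iff.mp hk).1]
    simp only [Finset.card_empty, Nat.cast_zero]
    positivity

end SeparatedSequences

section TestFunctions

lemma volConst_pos (n : ℕ) {α : ℝ} (hα : -1 < α) : 0 < volConst n α := by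
  have h0 : (0 : ℝ) ≤ n := Nat.cast_nonneg n
  have h1 := Real.Gamma_pos_of_pos (show 0 < n + 1 + α by linarith)
  have h2 := Real.Gamma_pos_of_pos (show 0 < α + 1 by linarith)
  rw [volConst]
  positivity

lemma lintegral_wMeas_eq {n : ℕ} {α : ℝ} (hα : -1 < α) {f : En n → ℝ≥0∞} (hf : Measurable f) :
    ∫⁻ z, f z ∂wMeas n α = (volume (ball (0 : En n) 1))⁻¹ * (ENNReal.ofReal (volConst n α) *
      ∫⁻ z in ball (0 : En n) 1, ENNReal.ofReal ((1 - ‖z‖ ^ 2) ^ α) * f z) := by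
  have hd : Measurable fun z : En n => ENNReal.ofReal ((1 - ‖z‖ ^ 2) ^ α) := by fun_prop
  rw [wMeas, lintegral_withDensity_eq_lintegral_mul _ (by fun_prop) hf, vMeas,
    lintegral_smul_measure, smul_eq_mul,
    ← lintegral_const_mul (f := fun z => ENNReal.ofReal ((1 - ‖z‖ ^ 2) ^ α) * f z)
      _ (hd.mul hf)]
  congr 1
  refine lintegral_congr fun z => ?_
  rw [Pi.mul_apply, ENNReal.ofReal_mul (volConst_pos n hα).le, mul_assoc]

/-- The test function `(1-|a|²)^{b-θ} / (1-⟨z,a⟩)^b`. -/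
def testFun {n : ℕ} (b : ℕ) (θ : ℝ) (a z : En n) : ℂ :=
  (((1 - ‖a‖ ^ 2) ^ (b - θ) : ℝ) : ℂ) / (1 - inner ℂ a z) ^ b

lemma differentiableOn_testFun {n : ℕ} (b : ℕ) (θ : ℝ) {a : En n} (ha : ‖a‖ < 1) :
    DifferentiableOn ℂ (testFun b θ a) (unitBall n) := by
  intro z hz
  have h1 : DifferentiableAt ℂ (fun z : En n => (1 - inner ℂ a z) ^ b) z :=
    (((innerSL ℂ a).differentiableAt).const_sub 1).pow b
  have h2 : DifferentiableAt ℂ (testFun b θ a) z := by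
    unfold testFun
    simp only [div_eq_mul_inv]
    refine (h1.fun_inv ?_).const_mul _
    exact pow_ne_zero b (one_sub_inner_ne_zero ha (mem_ball_zero_iff.mp hz))
  exact h2.differentiableWithinAt

lemma measurable_testFun {n : ℕ} (b : ℕ) (θ : ℝ) (a : En n) : Measurable (testFun b θ a) := by
  have h : Continuous fun z : En n => (1 - inner ℂ a z) ^ b := by fun_prop
  exact measurable_const.div h.measurable

lemma norm_testFun {n : ℕ} (b : ℕ) (θ : ℝ) {a : En n} (ha : ‖a‖ < 1) (z : En n) :
    ‖testFun b θ a z‖ = (1 - ‖a‖ ^ 2) ^ (b - θ) * ‖1 - inner ℂ a z‖ ^ (-(b : ℝ)) := by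
  have h := one_sub_norm_sq_pos ha
  rw [testFun, norm_div, norm_pow, Complex.norm_real, Real.norm_of_nonneg (by positivity),
    Real.rpow_neg (norm_nonneg _), Real.rpow_natCast, div_eq_mul_inv]

lemma testFun_ge_on_bergmanBall {n : ℕ} (b : ℕ) (θ δ : ℝ) {a z : En n} (ha : ‖a‖ < 1)
    (hz : z ∈ bergmanBall a δ) :
    (1 - ‖a‖ ^ 2) ^ (-θ) ≤ Real.exp (2 * δ) ^ b * ‖testFun b θ a z‖ := by
  rw [mem_bergmanBall_iff] at hz
  have hρ := one_sub_norm_sq_pos ha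
  have h1 := norm_one_sub_inner_le_of_dist_lt ha hz.1 ha hz.2
  have h3 : ‖1 - inner ℂ a a‖ = 1 - ‖a‖ ^ 2 := by
    rw [inner_self_eq_ofReal, ← Complex.ofReal_one, ← Complex.ofReal_sub, Complex.norm_real,
      Real.norm_of_nonneg hρ.le]
  rw [h3] at h1
  have h4 : 0 < ‖1 - inner ℂ a z‖ := norm_pos_iff.mpr (one_sub_inner_ne_zero ha hz.1)
  have h5 : ‖1 - inner ℂ a z‖ ^ b ≤ Real.exp (2 * δ) ^ b * (1 - ‖a‖ ^ 2) ^ b := by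
    rw [← mul_pow]; gcongr
  rw [norm_testFun b θ ha, Real.rpow_neg (norm_nonneg _), Real.rpow_natCast, ← mul_assoc,
    ← div_eq_mul_inv, le_div_iff₀ (by positivity), sub_eq_neg_add (b : ℝ) θ,
    Real.rpow_add_natCast hρ.ne']
  calc _ ≤ (1 - ‖a‖ ^ 2) ^ (-θ) * (Real.exp (2 * δ) ^ b * (1 - ‖a‖ ^ 2) ^ b) := by gcongr
    _ = _ := by ring

lemma sum_mul_rpow_le {ι : Type*} (F : Finset ι) {p : ℝ} (hp : 1 ≤ p) {g f : ι → ℝ}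
    (hg : ∀ i, 0 ≤ g i) (hf : ∀ i, 0 ≤ f i) :
    (∑ i ∈ F, g i * f i) ^ p ≤ (∑ i ∈ F, g i) ^ (p - 1) * ∑ i ∈ F, g i * f i ^ p := by
  have hp0 : 0 < p := by linarith
  have h1 : 0 ≤ ∑ i ∈ F, g i * f i ^ p :=
    Finset.sum_nonneg fun i _ => mul_nonneg (hg i) (Real.rpow_nonneg (hf i) _)
  have h2 : 0 ≤ ∑ i ∈ F, g i := Finset.sum_nonneg fun i _ => hg i
  refine (Real.rpow_le_rpow (Finset.sum_nonneg fun i _ => mul_nonneg (hg i) (hf i))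
    (Real.inner_le_weight_mul_Lp_of_nonneg F hp g f hg hf) hp0.le).trans (le_of_eq ?_)
  rw [Real.mul_rpow (by positivity) (by positivity), ← Real.rpow_mul h2, ← Real.rpow_mul h1,
    inv_mul_cancel₀ hp0.ne', Real.rpow_one]
  congr 2
  field_simp

lemma lintegral_sum_testFun_le {n : ℕ} (hn : 1 ≤ n) {p α ε : ℝ} (hp : 1 ≤ p) (hα : -1 < α)
    (hε : 0 < ε) : ∃ b : ℕ, ∃ C > (0 : ℝ), ∀ a : ℕ → En n, IsSeparated a ε →
      ∀ (F : Finset ℕ) (c : ℕ → ℂ),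
        ∫⁻ z, ‖∑ k ∈ F, c k * testFun b ((n + 1 + α) / p) (a k) z‖ₑ ^ p ∂wMeas n α ≤
          ENNReal.ofReal (C * ∑ k ∈ F, ‖c k‖ ^ p) := by
  have h0 : (0 : ℝ) ≤ n := Nat.cast_nonneg n
  have hp0 : 0 < p := by linarith
  set θ : ℝ := (n + 1 + α) / p with hθ
  have hθp : θ * p = n + 1 + α := by rw [hθ]; field_simp
  set γ : ℝ := (α + 1) / (2 * p) with hγ
  have hγ0 : 0 < γ := by rw [hγ]; apply div_pos <;> linarith
  have hγp : γ * (2 * p) = α + 1 := by rw [hγ]; field_simp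
  set t : ℝ := α - γ * (p - 1) with ht
  have ht1 : -1 < t := by rw [ht]; nlinarith
  have htα : t ≤ α := by rw [ht]; nlinarith
  obtain ⟨b, hb⟩ := exists_nat_gt (n + 1 + |α| + γ)
  have hαa := le_abs_self α
  have hαb := abs_nonneg α
  obtain ⟨C₁, hC₁, hsum⟩ := sum_kernel_le hn hε hγ0 (b := b) (by linarith)
  obtain ⟨C₂, hC₂, hFR⟩ := lintegral_forelliRudin_le hn ht1 (c := b - n - 1 - t) (by linarith)
  have hexp : (n : ℝ) + 1 + t + (b - n - 1 - t) = b := by ring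
  rw [hexp] at hFR
  set v := (volume (ball (0 : En n) 1)).toReal with hv
  have hvfin : volume (ball (0 : En n) 1) ≠ ∞ := measure_ball_lt_top.ne
  have hv0 : 0 < v := ENNReal.toReal_pos (measure_ball_pos _ _ one_pos).ne' hvfin
  have hve : (volume (ball (0 : En n) 1))⁻¹ = ENNReal.ofReal v⁻¹ := by
    rw [ENNReal.ofReal_inv_of_pos hv0, hv, ENNReal.ofReal_toReal hvfin]
  have hV := volConst_pos n hα
  refine ⟨b, v⁻¹ * (volConst n α * (C₁ ^ (p - 1) * C₂)), by positivity, fun a ha F c => ?_⟩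
  have hak : ∀ k, ‖a k‖ < 1 := fun k => mem_ball_zero_iff.mp (ha.1 k)
  have hρ : ∀ k, 0 < 1 - ‖a k‖ ^ 2 := fun k => one_sub_norm_sq_pos (hak k)
  set A : ℕ → ℝ := fun k => C₁ ^ (p - 1) *
    (‖c k‖ ^ p * (1 - ‖a k‖ ^ 2) ^ (b - n - 1 - t)) with hA
  have hA0 : ∀ k, 0 ≤ A k := fun k => by have := hρ k; positivity
  have hpt : ∀ z ∈ ball (0 : En n) 1, ENNReal.ofReal ((1 - ‖z‖ ^ 2) ^ α) *
      ‖∑ k ∈ F, c k * testFun b θ (a k) z‖ₑ ^ p ≤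
      ∑ k ∈ F, ENNReal.ofReal (A k) * ENNReal.ofReal
        ((1 - ‖z‖ ^ 2) ^ t * ‖1 - inner ℂ (a k) z‖ ^ (-(b : ℝ))) := by
    intro z hz
    rw [mem_ball_zero_iff] at hz
    have hz0 := one_sub_norm_sq_pos hz
    set g : ℕ → ℝ := fun k => (1 - ‖a k‖ ^ 2) ^ (b - γ) * ‖1 - inner ℂ (a k) z‖ ^ (-(b : ℝ)) with hg
    have hg0 : ∀ k, 0 ≤ g k := fun k => by have := hρ k; positivity
    have hgs : ∑ k ∈ F, g k ≤ C₁ * (1 - ‖z‖ ^ 2) ^ (-γ) := by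
      refine le_trans (le_of_eq ?_) (hsum a ha F z hz)
      refine Finset.sum_congr rfl fun k _ => ?_
      have e : ‖1 - inner ℂ (a k) z‖ = ‖1 - inner ℂ z (a k)‖ := by
        rw [← inner_conj_symm z (a k), ← RCLike.norm_conj (1 - inner ℂ (a k) z), map_sub, map_one]
      simp only [hg, e]
    set f : ℕ → ℝ := fun k => ‖c k‖ * (1 - ‖a k‖ ^ 2) ^ (γ - θ) with hf
    have hf0 : ∀ k, 0 ≤ f k := fun k => by have := hρ k; positivity
    have hn1 : ‖∑ k ∈ F, c k * testFun b θ (a k) z‖ ≤ ∑ k ∈ F, g k * f k := by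
      refine (norm_sum_le _ _).trans (le_of_eq (Finset.sum_congr rfl fun k _ => ?_))
      have e : (b - θ : ℝ) = (b - γ) + (γ - θ) := by ring
      rw [norm_mul, norm_testFun b θ (hak k), e, Real.rpow_add (hρ k)]
      simp only [hg, hf]; ring
    have hn2 : ‖∑ k ∈ F, c k * testFun b θ (a k) z‖ ^ p ≤
        (C₁ * (1 - ‖z‖ ^ 2) ^ (-γ)) ^ (p - 1) * ∑ k ∈ F, g k * f k ^ p := by
      refine (Real.rpow_le_rpow (norm_nonneg _) hn1 hp0.le).trans
        ((sum_mul_rpow_le F hp hg0 hf0).trans ?_)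
      exact mul_le_mul_of_nonneg_right
        (Real.rpow_le_rpow (Finset.sum_nonneg fun k _ => hg0 k) hgs (by linarith))
        (Finset.sum_nonneg fun k _ => mul_nonneg (hg0 k) (Real.rpow_nonneg (hf0 k) _))
    have hterm : ∀ k, g k * f k ^ p = ‖c k‖ ^ p * (1 - ‖a k‖ ^ 2) ^ (b - n - 1 - t) *
        ‖1 - inner ℂ (a k) z‖ ^ (-(b : ℝ)) := by
      intro k
      have h1 : f k ^ p = ‖c k‖ ^ p * (1 - ‖a k‖ ^ 2) ^ ((γ - θ) * p) := by
        rw [hf, Real.mul_rpow (norm_nonneg _) (Real.rpow_nonneg (hρ k).le _),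
          ← Real.rpow_mul (hρ k).le]
      have h2 : (b - n - 1 - t : ℝ) = (b - γ) + (γ - θ) * p := by
        rw [ht, sub_mul, hθp]; ring
      rw [h1, h2, Real.rpow_add (hρ k)]
      simp only [hg]; ring
    simp_rw [hterm] at hn2
    rw [← ofReal_norm, ENNReal.ofReal_rpow_of_nonneg (norm_nonneg _) hp0.le,
      ← ENNReal.ofReal_mul (by positivity)]
    simp_rw [← ENNReal.ofReal_mul (hA0 _)]
    rw [← ENNReal.ofReal_sum_of_nonneg
      fun k _ => mul_nonneg (hA0 k) (by positivity)]
    apply ENNReal.ofReal_le_ofReal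
    refine (mul_le_mul_of_nonneg_left hn2 (by positivity)).trans (le_of_eq ?_)
    rw [Real.mul_rpow hC₁.le (by positivity), ← Real.rpow_mul hz0.le, Finset.mul_sum,
      Finset.mul_sum]
    refine Finset.sum_congr rfl fun k _ => ?_
    have e : t = α + -γ * (p - 1) := by rw [ht]; ring
    rw [e, Real.rpow_add hz0]
    simp only [hA, e]; ring
  have hIle : ∀ k, ∫⁻ z in ball (0 : En n) 1, ENNReal.ofReal (A k) * ENNReal.ofReal
        ((1 - ‖z‖ ^ 2) ^ t * ‖1 - inner ℂ (a k) z‖ ^ (-(b : ℝ))) ≤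
      ENNReal.ofReal (C₁ ^ (p - 1) * C₂ * ‖c k‖ ^ p) := by
    intro k
    rw [lintegral_const_mul' _ _ ENNReal.ofReal_ne_top]
    refine (mul_le_mul_right (hFR (a k) (hak k)) _).trans ?_
    rw [← ENNReal.ofReal_mul (hA0 k)]
    apply ENNReal.ofReal_le_ofReal (le_of_eq _)
    have e : (1 - ‖a k‖ ^ 2) ^ (b - n - 1 - t : ℝ) *
        (1 - ‖a k‖ ^ 2) ^ (-(b - n - 1 - t : ℝ)) = 1 := by
      rw [← Real.rpow_add (hρ k), add_neg_cancel, Real.rpow_zero]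
    simp only [hA]
    linear_combination C₁ ^ (p - 1) * C₂ * ‖c k‖ ^ p * e
  have hmeas : Measurable fun z => ‖∑ k ∈ F, c k * testFun b θ (a k) z‖ₑ ^ p :=
    ((Finset.measurable_fun_sum F fun k _ =>
      (measurable_testFun b θ (a k)).const_mul _).enorm).pow_const p
  rw [lintegral_wMeas_eq hα hmeas, hve, mul_assoc, ENNReal.ofReal_mul (by positivity), mul_assoc,
    ENNReal.ofReal_mul hV.le]
  gcongr
  refine (setLIntegral_mono' measurableSet_ball hpt).trans ?_
  rw [lintegral_finsetSum' F fun k _ => by fun_prop, Finset.mul_sum,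
    ENNReal.ofReal_sum_of_nonneg fun k _ => by positivity]
  exact Finset.sum_le_sum fun k _ => hIle k

/-- Test functions in the Bergman space attached to a separated sequence. -/
lemma exists_testFamily {n : ℕ} (hn : 1 ≤ n) {p α δ ε : ℝ} (hp : 1 ≤ p) (hα : -1 < α)
    (hε : 0 < ε) [Fact (1 ≤ ENNReal.ofReal p)] :
    ∃ K > (0 : ℝ), ∀ a : ℕ → En n, IsSeparated a ε →
      ∃ (G : ℕ → BergmanSpace n p α) (h : ℕ → En n → ℂ),
        (∀ k, DifferentiableOn ℂ (h k) (unitBall n)) ∧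
        (∀ k, ((G k : Lp ℂ (ENNReal.ofReal p) (wMeas n α)) : En n → ℂ) =ᵐ[wMeas n α] h k) ∧
        (∀ k, ∀ z ∈ bergmanBall (a k) δ,
          (1 - ‖a k‖ ^ 2) ^ (-((n + 1 + α) / p)) ≤ K * ‖h k z‖) ∧
        ∀ (F : Finset ℕ) (c : ℕ → ℂ),
          ‖∑ k ∈ F, c k • G k‖ ≤ K * (∑ k ∈ F, ‖c k‖ ^ p) ^ (1 / p) := by
  obtain ⟨b, C, hC, hIle⟩ := lintegral_sum_testFun_le hn hp hα hε
  have hp0 : 0 < p := by linarith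
  have hP0 : ENNReal.ofReal p ≠ 0 := by simpa using hp0
  set θ : ℝ := (n + 1 + α) / p with hθ
  refine ⟨max (Real.exp (2 * δ) ^ b) (C ^ (1 / p)), by positivity, fun a ha => ?_⟩
  have hak : ∀ k, ‖a k‖ < 1 := fun k => mem_ball_zero_iff.mp (ha.1 k)
  have hnorm : ∀ (F : Finset ℕ) (c : ℕ → ℂ),
      eLpNorm (fun z => ∑ k ∈ F, c k * testFun b θ (a k) z) (ENNReal.ofReal p) (wMeas n α) ≤
        ENNReal.ofReal (C ^ (1 / p) * (∑ k ∈ F, ‖c k‖ ^ p) ^ (1 / p)) := by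
    intro F c
    rw [eLpNorm_eq_lintegral_rpow_enorm_toReal hP0 ENNReal.ofReal_ne_top,
      ENNReal.toReal_ofReal hp0.le,
      ← Real.mul_rpow hC.le (Finset.sum_nonneg fun k _ => by positivity),
      ← ENNReal.ofReal_rpow_of_nonneg
        (mul_nonneg hC.le (Finset.sum_nonneg fun k _ => by positivity)) (by positivity)]
    exact ENNReal.rpow_le_rpow (hIle a ha F c) (by positivity)
  have hmem : ∀ k, MemLp (testFun b θ (a k)) (ENNReal.ofReal p) (wMeas n α) := by
    intro k
    refine ⟨(measurable_testFun b θ (a k)).aestronglyMeasurable, ?_⟩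
    have := hnorm {k} fun _ => 1
    simp only [Finset.sum_singleton, one_mul] at this
    exact this.trans_lt ENNReal.ofReal_lt_top
  let G : ℕ → BergmanSpace n p α := fun k =>
    ⟨(hmem k).toLp _, testFun b θ (a k), differentiableOn_testFun b θ (hak k), (hmem k).coeFn_toLp⟩
  refine ⟨G, fun k => testFun b θ (a k), fun k => differentiableOn_testFun b θ (hak k),
    fun k => (hmem k).coeFn_toLp, fun k z hz => ?_, fun F c => ?_⟩
  · refine (testFun_ge_on_bergmanBall b θ δ (hak k) hz).trans ?_
    gcongr
    exact le_max_left _ _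
  · have hcoe : ((∑ k ∈ F, c k • G k : BergmanSpace n p α) :
        Lp ℂ (ENNReal.ofReal p) (wMeas n α)) = ∑ k ∈ F, c k • (hmem k).toLp _ := by
      simp [G]
    have hae : ((∑ k ∈ F, c k • (hmem k).toLp _ : Lp ℂ (ENNReal.ofReal p) (wMeas n α)) :
        En n → ℂ) =ᵐ[wMeas n α] fun z => ∑ k ∈ F, c k * testFun b θ (a k) z := by
      induction F using Finset.induction_on with
      | empty =>
        simp only [Finset.sum_empty]
        exact Lp.coeFn_zero ℂ (ENNReal.ofReal p) (wMeas n α)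
      | insert j F hj ih =>
        rw [Finset.sum_insert hj]
        filter_upwards [Lp.coeFn_add (c j • (hmem j).toLp _) (∑ k ∈ F, c k • (hmem k).toLp _),
          Lp.coeFn_smul (c j) ((hmem j).toLp _), (hmem j).coeFn_toLp, ih (by simp [G])]
          with z h1 h2 h3 h4
        rw [h1, Pi.add_apply, h2, Pi.smul_apply, h3, h4, Finset.sum_insert hj, smul_eq_mul]
    rw [Submodule.coe_norm, hcoe, Lp.norm_def, eLpNorm_congr_ae hae]
    refine (ENNReal.toReal_le_of_le_ofReal ?_ (hnorm F c)).trans ?_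
    · have : 0 ≤ ∑ k ∈ F, ‖c k‖ ^ p := Finset.sum_nonneg fun k _ => by positivity
      positivity
    · exact mul_le_mul_of_nonneg_right (le_max_right _ _)
        (Real.rpow_nonneg (Finset.sum_nonneg fun k _ => Real.rpow_nonneg (norm_nonneg _) _) _)

end TestFunctions

section Summing

variable {X Y : Type*} [NormedAddCommGroup X] [NormedSpace ℂ X]

/-- The `r`-summing inequality over arbitrary finite families, with an explicit bound on the
weak `ℓ^r` norm. -/
def SummingIneq [NormedAddCommGroup Y] (r : ℝ) (T : X → Y) (C : ℝ) : Prop :=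
  ∀ (ι : Type) [Fintype ι] (x : ι → X) (K : ℝ), 0 ≤ K →
    (∀ φ : X →L[ℂ] ℂ, ‖φ‖ ≤ 1 → ∑ i, ‖φ (x i)‖ ^ r ≤ K ^ r) → ∑ i, ‖T (x i)‖ ^ r ≤ (C * K) ^ r

lemma SummingBoundWith.summingIneq [NormedAddCommGroup Y] {r C : ℝ} {T : X → Y} (hr : 0 < r)
    (hC : 0 ≤ C) (h : SummingBoundWith r r T C) : SummingIneq r T C := by
  intro ι _ x K hK hφ
  set e := Fintype.equivFin ι
  have h1 := h (Fintype.card ι) (x ∘ e.symm)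
  have h2 : ⨆ φ : {φ : X →L[ℂ] ℂ // ‖φ‖ ≤ 1},
      (∑ k, ‖φ.1 ((x ∘ e.symm) k)‖ ^ r) ^ (1 / r) ≤ K := by
    refine Real.iSup_le (fun φ => ?_) hK
    rw [one_div, Real.rpow_inv_le_iff_of_pos (Finset.sum_nonneg fun k _ => by positivity) hK hr]
    refine le_trans (le_of_eq ?_) (hφ φ.1 φ.2)
    exact Equiv.sum_comp e.symm fun i => ‖φ.1 (x i)‖ ^ r
  have h3 := h1.trans (mul_le_mul_of_nonneg_left h2 hC)
  rw [one_div, Real.rpow_inv_le_iff_of_pos (Finset.sum_nonneg fun k _ => by positivity)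
    (by positivity) hr] at h3
  refine le_trans (le_of_eq ?_) h3
  exact (Equiv.sum_comp e.symm fun i => ‖T (x i)‖ ^ r).symm

lemma SummingIneq.mono_exponent [NormedAddCommGroup Y] [NormedSpace ℂ Y] {r s C : ℝ}
    {T : X →ₗ[ℂ] Y} (hr : 0 < r) (hrs : r ≤ s) (hC : 0 ≤ C) (h : SummingIneq r T C) :
    SummingIneq s T C := by
  rcases hrs.eq_or_lt with rfl | hlt
  · exact h
  intro ι _ x K hK hφ
  have hs : 0 < s := hr.trans hlt
  have hsr : 0 < s - r := by linarith
  set S := ∑ i, ‖T (x i)‖ ^ s with hS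
  have hS0 : 0 ≤ S := Finset.sum_nonneg fun i _ => by positivity
  rcases hS0.eq_or_lt with hz | hSpos
  · rw [← hz]; positivity
  set l : ι → ℝ := fun i => ‖T (x i)‖ ^ ((s - r) / r) with hl
  have hl0 : ∀ i, 0 ≤ l i := fun i => by positivity
  have hlr : ∀ i, l i ^ r = ‖T (x i)‖ ^ (s - r) := fun i => by
    rw [hl, ← Real.rpow_mul (norm_nonneg _), div_mul_cancel₀ _ hr.ne']
  have hlx : ∀ i (u : ℝ), 0 ≤ u → (l i * u) ^ r = ‖T (x i)‖ ^ (s - r) * u ^ r := fun i u hu => by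
    rw [Real.mul_rpow (hl0 i) hu, hlr]
  have hpq : (s / (s - r)).HolderConjugate (s / r) := by
    rw [Real.holderConjugate_iff]
    refine ⟨by rw [lt_div_iff₀ hsr]; linarith, ?_⟩
    field_simp; ring
  have key := h ι (fun i => (l i : ℂ) • x i) (S ^ ((s - r) / (s * r)) * K) (by positivity) (by
    intro φ hφ1
    have e1 : ∀ i, ‖φ ((l i : ℂ) • x i)‖ ^ r = ‖T (x i)‖ ^ (s - r) * ‖φ (x i)‖ ^ r := fun i => by
      rw [map_smul, norm_smul, Complex.norm_real, Real.norm_of_nonneg (hl0 i),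
        hlx i _ (norm_nonneg _)]
    simp_rw [e1]
    refine (Real.inner_le_Lp_mul_Lq_of_nonneg _ hpq (fun i _ => by positivity)
      (fun i _ => by positivity)).trans ?_
    have e2 : ∀ i, (‖T (x i)‖ ^ (s - r)) ^ (s / (s - r)) = ‖T (x i)‖ ^ s := fun i => by
      rw [← Real.rpow_mul (norm_nonneg _), mul_div_cancel₀ _ hsr.ne']
    have e3 : ∀ i, (‖φ (x i)‖ ^ r) ^ (s / r) = ‖φ (x i)‖ ^ s := fun i => by
      rw [← Real.rpow_mul (norm_nonneg _), mul_div_cancel₀ _ hr.ne']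
    simp_rw [e2, e3]
    have e4 : (S ^ ((s - r) / (s * r)) * K) ^ r =
        S ^ (1 / (s / (s - r))) * (K ^ s) ^ (1 / (s / r)) := by
      rw [Real.mul_rpow (by positivity) hK, ← Real.rpow_mul hS0, ← Real.rpow_mul hK]
      congr 2 <;> field_simp
    rw [e4]
    gcongr
    exact hφ φ hφ1)
  have e5 : ∀ i, ‖T ((l i : ℂ) • x i)‖ ^ r = ‖T (x i)‖ ^ s := fun i => by
    rw [map_smul, norm_smul, Complex.norm_real, Real.norm_of_nonneg (hl0 i),
      hlx i _ (norm_nonneg _),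
      ← Real.rpow_add_of_nonneg (norm_nonneg _) hsr.le hr.le, sub_add_cancel]
  simp_rw [e5] at key
  rw [← hS, mul_left_comm, Real.mul_rpow (by positivity) (by positivity),
    ← Real.rpow_mul hS0] at key
  have e6 : (s - r) / (s * r) * r = 1 - r / s := by field_simp
  rw [e6, Real.rpow_sub hSpos, Real.rpow_one, div_mul_eq_mul_div,
    le_div_iff₀ (by positivity)] at key
  have key2 := le_of_mul_le_mul_left key hSpos
  have := Real.rpow_le_rpow (by positivity) key2 (show 0 ≤ s / r by positivity)
  rw [← Real.rpow_mul hS0, ← Real.rpow_mul (by positivity)] at this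
  have e7 : r / s * (s / r) = 1 := by field_simp
  have e8 : r * (s / r) = s := by field_simp
  rwa [e7, e8, Real.rpow_one] at this

end Summing

section WeakSummability

variable {X : Type*} [NormedAddCommGroup X] [NormedSpace ℂ X] {G : ℕ → X} {K p : ℝ}

lemma norm_sum_mul_apply_le
    (hG : ∀ (F : Finset ℕ) (c : ℕ → ℂ), ‖∑ k ∈ F, c k • G k‖ ≤ K * (∑ k ∈ F, ‖c k‖ ^ p) ^ (1 / p))
    {φ : X →L[ℂ] ℂ} (hφ : ‖φ‖ ≤ 1) (F : Finset ℕ) (c : ℕ → ℂ) :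
    ‖∑ k ∈ F, c k * φ (G k)‖ ≤ K * (∑ k ∈ F, ‖c k‖ ^ p) ^ (1 / p) := by
  have h := (φ.le_of_opNorm_le hφ (∑ k ∈ F, c k • G k)).trans_eq (one_mul _)
  rw [map_sum] at h
  simp only [map_smul, smul_eq_mul] at h
  exact h.trans (hG F c)

lemma norm_apply_le
    (hG : ∀ (F : Finset ℕ) (c : ℕ → ℂ), ‖∑ k ∈ F, c k • G k‖ ≤ K * (∑ k ∈ F, ‖c k‖ ^ p) ^ (1 / p))
    {φ : X →L[ℂ] ℂ} (hφ : ‖φ‖ ≤ 1) (k : ℕ) : ‖φ (G k)‖ ≤ K := by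
  simpa using norm_sum_mul_apply_le hG hφ {k} fun _ => 1

lemma sum_weighted_norm_apply_le (w : ℕ → ℝ) (hw : ∀ k, 0 ≤ w k)
    (hG : ∀ (F : Finset ℕ) (c : ℕ → ℂ), ‖∑ k ∈ F, c k • G k‖ ≤ K * (∑ k ∈ F, ‖c k‖ ^ p) ^ (1 / p))
    {φ : X →L[ℂ] ℂ} (hφ : ‖φ‖ ≤ 1) (F : Finset ℕ) :
    ∑ k ∈ F, w k * ‖φ (G k)‖ ^ 2 ≤ K * (∑ k ∈ F, (w k * ‖φ (G k)‖) ^ p) ^ (1 / p) := by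
  have h := norm_sum_mul_apply_le hG hφ F fun k => (w k : ℂ) * conj (φ (G k))
  have e1 : ∑ k ∈ F, (w k : ℂ) * conj (φ (G k)) * φ (G k) =
      ((∑ k ∈ F, w k * ‖φ (G k)‖ ^ 2 : ℝ) : ℂ) := by
    push_cast
    refine Finset.sum_congr rfl fun k _ => ?_
    rw [mul_assoc, Complex.conj_mul']
  rw [e1, Complex.norm_real, Real.norm_of_nonneg
    (Finset.sum_nonneg fun k _ => mul_nonneg (hw k) (by positivity))] at h
  refine h.trans (le_of_eq ?_)
  congr 2
  refine Finset.sum_congr rfl fun k _ => ?_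
  rw [norm_mul, Complex.norm_real, Real.norm_of_nonneg (hw k), RCLike.norm_conj]

lemma sum_norm_apply_rpow_le (hp : 1 < p) (hK : 0 ≤ K)
    (hG : ∀ (F : Finset ℕ) (c : ℕ → ℂ), ‖∑ k ∈ F, c k • G k‖ ≤ K * (∑ k ∈ F, ‖c k‖ ^ p) ^ (1 / p))
    {φ : X →L[ℂ] ℂ} (hφ : ‖φ‖ ≤ 1) (F : Finset ℕ) {s : ℝ} (hs : p / (p - 1) ≤ s) :
    ∑ k ∈ F, ‖φ (G k)‖ ^ s ≤ K ^ s := by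
  have hp1 : 0 < p - 1 := by linarith
  set p' := p / (p - 1) with hp'
  have hp'0 : 0 < p' := by positivity
  have hmul : (p' - 1) * p = p' := by rw [hp']; field_simp; ring
  set S := ∑ k ∈ F, ‖φ (G k)‖ ^ p' with hS
  have hS0 : 0 ≤ S := Finset.sum_nonneg fun k _ => by positivity
  have hSK : S ≤ K ^ p' := by
    rcases hS0.eq_or_lt with hz | hSpos
    · rw [← hz]; positivity
    have h := sum_weighted_norm_apply_le (fun k => ‖φ (G k)‖ ^ (p' - 2)) (fun k => by positivity)
      hG hφ F
    have e1 : ∀ k, ‖φ (G k)‖ ^ (p' - 2) * ‖φ (G k)‖ ^ 2 = ‖φ (G k)‖ ^ p' := by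
      intro k
      rcases (norm_nonneg (φ (G k))).eq_or_lt with h0 | h0
      · rw [← h0, Real.zero_rpow hp'0.ne']; simp
      · rw [← Real.rpow_two, ← Real.rpow_add h0, sub_add_cancel]
    have e2 : ∀ k, (‖φ (G k)‖ ^ (p' - 2) * ‖φ (G k)‖) ^ p = ‖φ (G k)‖ ^ p' := by
      intro k
      rcases (norm_nonneg (φ (G k))).eq_or_lt with h0 | h0
      · rw [← h0, Real.zero_rpow hp'0.ne', mul_zero, Real.zero_rpow (by linarith)]
      · rw [← Real.rpow_add_one h0.ne', ← Real.rpow_mul h0.le]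
        congr 1
        linear_combination hmul
    simp_rw [e1, e2] at h
    rw [← hS] at h
    have h2 : S ^ (1 - 1 / p) ≤ K := by
      rw [Real.rpow_sub hSpos, Real.rpow_one, div_le_iff₀ (by positivity)]
      exact h
    have h3 := Real.rpow_le_rpow (by positivity) h2 hp'0.le
    rw [← Real.rpow_mul hS0] at h3
    have e3 : (1 - 1 / p) * p' = 1 := by rw [hp']; field_simp
    rwa [e3, Real.rpow_one] at h3
  have hsp : 0 ≤ s - p' := by linarith
  calc ∑ k ∈ F, ‖φ (G k)‖ ^ s = ∑ k ∈ F, ‖φ (G k)‖ ^ p' * ‖φ (G k)‖ ^ (s - p') := by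
        refine Finset.sum_congr rfl fun k _ => ?_
        rw [← Real.rpow_add_of_nonneg (norm_nonneg _) hp'0.le hsp, add_sub_cancel]
    _ ≤ ∑ k ∈ F, ‖φ (G k)‖ ^ p' * K ^ (s - p') := by
        gcongr with k
        exact norm_apply_le hG hφ k
    _ = S * K ^ (s - p') := by rw [Finset.sum_mul]
    _ ≤ K ^ p' * K ^ (s - p') := by gcongr
    _ = K ^ s := by rw [← Real.rpow_add_of_nonneg hK hp'0.le hsp, add_sub_cancel]

lemma sum_sq_mul_norm_apply_sq_le (hp1 : 1 ≤ p) (hp2 : p < 2) (hK : 0 ≤ K)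
    (hG : ∀ (F : Finset ℕ) (c : ℕ → ℂ), ‖∑ k ∈ F, c k • G k‖ ≤ K * (∑ k ∈ F, ‖c k‖ ^ p) ^ (1 / p))
    {φ : X →L[ℂ] ℂ} (hφ : ‖φ‖ ≤ 1) (F : Finset ℕ) {l : ℕ → ℝ} (hl : ∀ k, 0 ≤ l k) :
    ∑ k ∈ F, l k ^ 2 * ‖φ (G k)‖ ^ 2 ≤
      (K * (∑ k ∈ F, l k ^ (2 * p / (2 - p))) ^ ((2 - p) / (2 * p))) ^ 2 := by
  have hp0 : 0 < p := by linarith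
  have h2p : 0 < 2 - p := by linarith
  set Q := ∑ k ∈ F, l k ^ 2 * ‖φ (G k)‖ ^ 2 with hQ
  have hQ0 : 0 ≤ Q := Finset.sum_nonneg fun k _ => by positivity
  set L := ∑ k ∈ F, l k ^ (2 * p / (2 - p)) with hL
  have hL0 : 0 ≤ L := Finset.sum_nonneg fun k _ => Real.rpow_nonneg (hl k) _
  rcases hQ0.eq_or_lt with hz | hQpos
  · rw [← hz]; positivity
  have h := sum_weighted_norm_apply_le (fun k => l k ^ 2) (fun k => by positivity) hG hφ F
  have hpq : (2 / (2 - p)).HolderConjugate (2 / p) := by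
    rw [Real.holderConjugate_iff]
    refine ⟨by rw [lt_div_iff₀ h2p]; linarith, ?_⟩
    field_simp; ring
  have hH := Real.inner_le_Lp_mul_Lq_of_nonneg F hpq (f := fun k => l k ^ p)
    (g := fun k => (l k * ‖φ (G k)‖) ^ p) (fun k _ => Real.rpow_nonneg (hl k) _)
    (fun k _ => Real.rpow_nonneg (mul_nonneg (hl k) (norm_nonneg _)) _)
  have e1 : ∀ k, l k ^ p * (l k * ‖φ (G k)‖) ^ p = (l k ^ 2 * ‖φ (G k)‖) ^ p := fun k => by
    rw [← Real.mul_rpow (hl k) (mul_nonneg (hl k) (norm_nonneg _))]; ring_nf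
  have e2 : ∀ k, (l k ^ p) ^ (2 / (2 - p)) = l k ^ (2 * p / (2 - p)) := fun k => by
    rw [← Real.rpow_mul (hl k)]; congr 1; ring
  have e3 : ∀ k, ((l k * ‖φ (G k)‖) ^ p) ^ (2 / p) = l k ^ 2 * ‖φ (G k)‖ ^ 2 := fun k => by
    rw [← Real.rpow_mul (mul_nonneg (hl k) (norm_nonneg _)), mul_div_cancel₀ _ hp0.ne',
      Real.rpow_two, mul_pow]
  simp_rw [e1, e2, e3] at hH
  rw [← hL, ← hQ] at hH
  have h4 : (∑ k ∈ F, (l k ^ 2 * ‖φ (G k)‖) ^ p) ^ (1 / p) ≤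
      L ^ ((2 - p) / (2 * p)) * Q ^ (1 / 2 : ℝ) := by
    refine (Real.rpow_le_rpow (Finset.sum_nonneg fun k _ => Real.rpow_nonneg
      (mul_nonneg (by positivity) (norm_nonneg _)) _) hH (by positivity)).trans (le_of_eq ?_)
    rw [Real.mul_rpow (by positivity) (by positivity), ← Real.rpow_mul hL0, ← Real.rpow_mul hQ0]
    congr 2 <;> field_simp
  have h5 : Q ≤ K * (L ^ ((2 - p) / (2 * p)) * Q ^ (1 / 2 : ℝ)) :=
    h.trans (mul_le_mul_of_nonneg_left h4 hK)
  rw [← Real.sqrt_eq_rpow, ← mul_assoc] at h5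
  have hsq := Real.mul_self_sqrt hQ0
  have hsp := Real.sqrt_pos.mpr hQpos
  have h6 : √Q ≤ K * L ^ ((2 - p) / (2 * p)) := by
    refine le_of_mul_le_mul_right ?_ hsp
    rw [hsq]; exact h5
  rw [← Real.sq_sqrt hQ0]
  gcongr

end WeakSummability

section Khinchine

variable {ι : Type*} [Fintype ι]

/-- The sign attached to a Boolean. -/
def boolSign (b : Bool) : ℝ := if b then 1 else -1

lemma boolSign_mul_self (b : Bool) : boolSign b * boolSign b = 1 := by
  cases b <;> simp [boolSign]

lemma exists_normalized (c : ι → ℂ) (hc : ∑ i, ‖c i‖ ^ 2 ≠ 0) :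
    ∃ d : ι → ℂ, ∑ i, ‖d i‖ ^ 2 = 1 ∧ ∀ R : ℝ, ∀ ω : ι → Bool,
      ‖∑ i, (boolSign (ω i) : ℂ) * c i‖ ^ R =
        (∑ i, ‖c i‖ ^ 2) ^ (R / 2) * ‖∑ i, (boolSign (ω i) : ℂ) * d i‖ ^ R := by
  set S := ∑ i, ‖c i‖ ^ 2 with hS
  have hS0 : 0 < S := (Finset.sum_nonneg fun i _ => by positivity).lt_of_ne' hc
  have hσ : 0 < √S := Real.sqrt_pos.mpr hS0
  refine ⟨fun i => ((√S)⁻¹ : ℝ) * c i, ?_, fun R ω => ?_⟩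
  · simp_rw [norm_mul, mul_pow, Complex.norm_real, Real.norm_of_nonneg (inv_pos.mpr hσ).le]
    rw [← Finset.mul_sum, ← hS, inv_pow, Real.sq_sqrt hS0.le, inv_mul_cancel₀ hc]
  · have e : S ^ (R / 2) = √S ^ R := by
      rw [Real.sqrt_eq_rpow, ← Real.rpow_mul hS0.le]; congr 1; ring
    rw [e, ← Real.mul_rpow hσ.le (norm_nonneg _)]
    congr 1
    have e2 : ∑ i, (boolSign (ω i) : ℂ) * c i =
        (√S : ℂ) * ∑ i, (boolSign (ω i) : ℂ) * (((√S)⁻¹ : ℝ) * c i) := by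
      rw [Finset.mul_sum]
      refine Finset.sum_congr rfl fun i _ => ?_
      have : (√S : ℂ) ≠ 0 := by exact_mod_cast hσ.ne'
      push_cast
      field_simp
    rw [e2, norm_mul, Complex.norm_real, Real.norm_of_nonneg hσ.le]

variable [DecidableEq ι]

lemma sum_exp_boolSign (a : ι → ℝ) :
    ∑ ω : ι → Bool, Real.exp (∑ i, boolSign (ω i) * a i) =
      2 ^ Fintype.card ι * ∏ i, Real.cosh (a i) := by
  simp_rw [Real.exp_sum]
  have h := Finset.prod_univ_sum (fun _ : ι => (Finset.univ : Finset Bool))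
    (fun i b => Real.exp (boolSign b * a i))
  rw [Fintype.piFinset_univ] at h
  rw [← h, ← Finset.card_univ, ← Finset.prod_const, ← Finset.prod_mul_distrib]
  refine Finset.prod_congr rfl fun i _ => ?_
  rw [Fintype.sum_bool, Real.cosh_eq]
  simp [boolSign]
  ring

lemma sum_exp_abs_boolSign_le (a : ι → ℝ) :
    ∑ ω : ι → Bool, Real.exp |∑ i, boolSign (ω i) * a i| ≤
      2 ^ Fintype.card ι * (2 * Real.exp ((∑ i, a i ^ 2) / 2)) := by
  have hcosh : ∀ a : ι → ℝ, ∏ i, Real.cosh (a i) ≤ Real.exp ((∑ i, a i ^ 2) / 2) := by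
    intro a
    rw [Finset.sum_div, Real.exp_sum]
    exact Finset.prod_le_prod (fun i _ => (Real.cosh_pos _).le)
      fun i _ => Real.cosh_le_exp_half_sq _
  have h1 := sum_exp_boolSign a
  have h2 := sum_exp_boolSign fun i => -a i
  have h3 := hcosh a
  simp only [Real.cosh_neg, mul_neg, Finset.sum_neg_distrib] at h2
  calc ∑ ω : ι → Bool, Real.exp |∑ i, boolSign (ω i) * a i|
      ≤ ∑ ω : ι → Bool, (Real.exp (∑ i, boolSign (ω i) * a i) +
          Real.exp (-∑ i, boolSign (ω i) * a i)) :=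
        Finset.sum_le_sum fun ω _ => Real.exp_abs_le _
    _ = 2 ^ Fintype.card ι * (2 * ∏ i, Real.cosh (a i)) := by
        rw [Finset.sum_add_distrib, h1, h2]; ring
    _ ≤ _ := by gcongr

lemma rpow_le_factorial_mul_exp {x R : ℝ} (hx : 0 ≤ x) (hR : 0 ≤ R) :
    x ^ R ≤ (⌈R⌉₊.factorial : ℝ) * Real.exp x := by
  have hf : (1 : ℝ) ≤ (⌈R⌉₊.factorial : ℝ) := by exact_mod_cast Nat.factorial_pos _
  rcases le_total x 1 with h | h
  · have h1 := Real.rpow_le_one hx h hR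
    have h2 := Real.one_le_exp hx
    nlinarith
  · have h1 : x ^ R ≤ x ^ ⌈R⌉₊ := by
      rw [← Real.rpow_natCast]; exact Real.rpow_le_rpow_of_exponent_le h (Nat.le_ceil R)
    have h2 := Real.pow_div_factorial_le_exp x hx ⌈R⌉₊
    rw [div_le_iff₀ (by positivity)] at h2
    linarith

lemma sum_norm_boolSign_rpow_le_of_sum_sq_eq_one {R : ℝ} (hR : 0 ≤ R) {c : ι → ℂ}
    (hc : ∑ i, ‖c i‖ ^ 2 = 1) :
    ∑ ω : ι → Bool, ‖∑ i, (boolSign (ω i) : ℂ) * c i‖ ^ R ≤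
      2 ^ Fintype.card ι * ((⌈R⌉₊.factorial : ℝ) * (2 * Real.exp 2)) := by
  have hpart : ∀ f : ι → ℝ, (∀ i, |f i| ≤ ‖c i‖) →
      ∑ ω : ι → Bool, Real.exp (2 * |∑ i, boolSign (ω i) * f i|) ≤
        2 ^ Fintype.card ι * (2 * Real.exp 2) := by
    intro f hf
    have h := sum_exp_abs_boolSign_le fun i => 2 * f i
    have e : ∀ ω : ι → Bool, |∑ i, boolSign (ω i) * (2 * f i)| =
        2 * |∑ i, boolSign (ω i) * f i| := by
      intro ω
      rw [← abs_of_pos (two_pos : (0 : ℝ) < 2), ← abs_mul, Finset.mul_sum,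
        abs_of_pos (two_pos : (0 : ℝ) < 2)]
      congr 1
      exact Finset.sum_congr rfl fun i _ => by ring
    simp_rw [e] at h
    refine h.trans ?_
    gcongr
    have : ∑ i, (2 * f i) ^ 2 ≤ 4 * ∑ i, ‖c i‖ ^ 2 := by
      rw [Finset.mul_sum]
      refine Finset.sum_le_sum fun i _ => ?_
      have := pow_le_pow_left₀ (abs_nonneg _) (hf i) 2
      rw [sq_abs] at this
      linarith
    linarith
  have hre := hpart (fun i => (c i).re) fun i => Complex.abs_re_le_norm _
  have him := hpart (fun i => (c i).im) fun i => Complex.abs_im_le_norm _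
  have hpt : ∀ ω : ι → Bool, ‖∑ i, (boolSign (ω i) : ℂ) * c i‖ ^ R ≤ (⌈R⌉₊.factorial : ℝ) *
      ((Real.exp (2 * |∑ i, boolSign (ω i) * (c i).re|) +
        Real.exp (2 * |∑ i, boolSign (ω i) * (c i).im|)) / 2) := by
    intro ω
    refine (rpow_le_factorial_mul_exp (norm_nonneg _) hR).trans ?_
    gcongr
    set u := |∑ i, boolSign (ω i) * (c i).re|
    set v := |∑ i, boolSign (ω i) * (c i).im|
    have h1 : ‖∑ i, (boolSign (ω i) : ℂ) * c i‖ ≤ u + v := by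
      refine (Complex.norm_le_abs_re_add_abs_im _).trans (le_of_eq ?_)
      simp [u, v]
    have h2 : Real.exp (2 * u) = Real.exp u * Real.exp u := by rw [← Real.exp_add]; ring_nf
    have h3 : Real.exp (2 * v) = Real.exp v * Real.exp v := by rw [← Real.exp_add]; ring_nf
    refine (Real.exp_le_exp.mpr h1).trans ?_
    rw [h2, h3, Real.exp_add]
    nlinarith [sq_nonneg (Real.exp u - Real.exp v)]
  refine (Finset.sum_le_sum fun ω _ => hpt ω).trans ?_
  rw [← Finset.mul_sum, ← Finset.sum_div, Finset.sum_add_distrib, mul_left_comm]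
  gcongr
  linarith

/-- The upper Khinchine inequality. -/
lemma sum_norm_boolSign_rpow_le {R : ℝ} (hR : 0 < R) (c : ι → ℂ) :
    ∑ ω : ι → Bool, ‖∑ i, (boolSign (ω i) : ℂ) * c i‖ ^ R ≤
      2 ^ Fintype.card ι * ((⌈R⌉₊.factorial : ℝ) * (2 * Real.exp 2)) *
        (∑ i, ‖c i‖ ^ 2) ^ (R / 2) := by
  by_cases hc : ∑ i, ‖c i‖ ^ 2 = 0
  · have h0 : ∀ i, c i = 0 := fun i => by
      have := (Finset.sum_eq_zero_iff_of_nonneg fun i _ => by positivity).mp hc i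
        (Finset.mem_univ i)
      simpa using this
    simp [h0, Real.zero_rpow hR.ne', Real.zero_rpow (half_pos hR).ne']
  · obtain ⟨d, hd, h⟩ := exists_normalized c hc
    simp_rw [h R]
    rw [← Finset.mul_sum, mul_comm]
    gcongr
    exact sum_norm_boolSign_rpow_le_of_sum_sq_eq_one hR.le hd

lemma sum_boolSign_mul_boolSign {i j : ι} (hij : i ≠ j) :
    ∑ ω : ι → Bool, boolSign (ω i) * boolSign (ω j) = 0 := by
  have hinv : Function.Involutive fun ω : ι → Bool => Function.update ω i (!ω i) := by
    intro ω
    simp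
  have h := Equiv.sum_comp (Function.Involutive.toPerm _ hinv)
    fun ω : ι → Bool => boolSign (ω i) * boolSign (ω j)
  have e : ∀ ω : ι → Bool, boolSign (Function.Involutive.toPerm _ hinv ω i) *
      boolSign (Function.Involutive.toPerm _ hinv ω j) =
      -(boolSign (ω i) * boolSign (ω j)) := by
    intro ω
    simp only [Function.Involutive.coe_toPerm, Function.update_self,
      Function.update_of_ne hij.symm]
    cases ω i <;> cases ω j <;> simp [boolSign]
  simp_rw [e, Finset.sum_neg_distrib] at h
  linarith

lemma sum_norm_boolSign_sq (c : ι → ℂ) :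
    ∑ ω : ι → Bool, ‖∑ i, (boolSign (ω i) : ℂ) * c i‖ ^ 2 =
      2 ^ Fintype.card ι * ∑ i, ‖c i‖ ^ 2 := by
  have key : ∑ ω : ι → Bool, ((‖∑ i, (boolSign (ω i) : ℂ) * c i‖ : ℂ)) ^ 2 =
      2 ^ Fintype.card ι * ∑ i, (‖c i‖ : ℂ) ^ 2 := by
    have h1 : ∀ ω : ι → Bool, ((‖∑ i, (boolSign (ω i) : ℂ) * c i‖ : ℂ)) ^ 2 =
        ∑ i, ∑ j, ((boolSign (ω i) * boolSign (ω j) : ℝ) : ℂ) * (conj (c i) * c j) := by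
      intro ω
      rw [← Complex.conj_mul', map_sum, Finset.sum_mul_sum]
      refine Finset.sum_congr rfl fun i _ => Finset.sum_congr rfl fun j _ => ?_
      rw [map_mul, Complex.conj_ofReal]
      push_cast
      ring
    simp_rw [h1]
    rw [Finset.sum_comm, Finset.mul_sum]
    refine Finset.sum_congr rfl fun i _ => ?_
    rw [Finset.sum_comm]
    simp_rw [← Finset.sum_mul, ← Complex.ofReal_sum]
    rw [Finset.sum_eq_single i]
    · simp_rw [boolSign_mul_self]
      rw [Complex.conj_mul']
      simp
    · intro j _ hj
      rw [sum_boolSign_mul_boolSign hj.symm]; simp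
    · simp
  exact_mod_cast key

/-- The lower Khinchine inequality. -/
lemma le_sum_norm_boolSign_rpow {q : ℝ} (hq : 1 ≤ q) :
    ∃ K > (0 : ℝ), ∀ (ι : Type) [Fintype ι] [DecidableEq ι] (c : ι → ℂ),
      2 ^ Fintype.card ι * (∑ i, ‖c i‖ ^ 2) ^ (q / 2) ≤
        K * ∑ ω : ι → Bool, ‖∑ i, (boolSign (ω i) : ℂ) * c i‖ ^ q := by
  set B : ℝ := (⌈(4 : ℝ)⌉₊.factorial : ℝ) * (2 * Real.exp 2) with hB
  have hB1 : 1 ≤ B := by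
    have hf : (1 : ℝ) ≤ (⌈(4 : ℝ)⌉₊.factorial : ℝ) := by exact_mod_cast Nat.factorial_pos _
    have := Real.one_le_exp (show (0 : ℝ) ≤ 2 by norm_num)
    nlinarith
  have hB0 : 0 < B := by linarith
  refine ⟨(2 * B) ^ q, by positivity, fun ι _ _ c => ?_⟩
  by_cases hc : ∑ i, ‖c i‖ ^ 2 = 0
  · rw [hc, Real.zero_rpow (by positivity), mul_zero]
    exact mul_nonneg (by positivity) (Finset.sum_nonneg fun ω _ => by positivity)
  obtain ⟨d, hd, h⟩ := exists_normalized c hc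
  simp_rw [h q]
  rw [← Finset.mul_sum, mul_left_comm, mul_comm]
  refine mul_le_mul_of_nonneg_left ?_
    (Real.rpow_nonneg (Finset.sum_nonneg fun i _ => by positivity) _)
  set m : ℝ := 2 ^ Fintype.card ι with hm
  have hm0 : 0 < m := by positivity
  set Z : (ι → Bool) → ℝ := fun ω => ‖∑ i, (boolSign (ω i) : ℂ) * d i‖ with hZ
  have hZ0 : ∀ ω, 0 ≤ Z ω := fun ω => norm_nonneg _
  have h2 : ∑ ω, Z ω ^ 2 = m := by
    rw [hZ, sum_norm_boolSign_sq, hd, mul_one]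
  have h4 : ∑ ω, Z ω ^ 4 ≤ m * B := by
    have := sum_norm_boolSign_rpow_le_of_sum_sq_eq_one (show (0 : ℝ) ≤ 4 by norm_num) hd
    refine le_trans (le_of_eq ?_) this
    refine Finset.sum_congr rfl fun ω _ => ?_
    rw [hZ]; norm_cast
  have h1 : m ≤ 2 * B * ∑ ω, Z ω := by
    have hpt : ∀ ω, B⁻¹ * Z ω ^ 2 - 4 / 27 * B⁻¹ ^ 3 * Z ω ^ 4 ≤ Z ω := by
      intro ω
      set y := B⁻¹ * Z ω with hy
      have hy0 : 0 ≤ y := mul_nonneg (inv_pos.mpr hB0).le (hZ0 ω)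
      have h3 : y - 4 / 27 * y ^ 3 ≤ 1 := by
        nlinarith [mul_nonneg (by linarith : 0 ≤ y + 3) (sq_nonneg (2 * y - 3))]
      calc B⁻¹ * Z ω ^ 2 - 4 / 27 * B⁻¹ ^ 3 * Z ω ^ 4 = Z ω * (y - 4 / 27 * y ^ 3) := by
            rw [hy]; ring
        _ ≤ Z ω * 1 := mul_le_mul_of_nonneg_left h3 (hZ0 ω)
        _ = Z ω := mul_one _
    have hs := Finset.sum_le_sum fun ω (_ : ω ∈ Finset.univ) => hpt ω
    rw [Finset.sum_sub_distrib, ← Finset.mul_sum, ← Finset.mul_sum, h2] at hs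
    have h5 : 4 / 27 * B⁻¹ ^ 3 * ∑ ω, Z ω ^ 4 ≤ 4 / 27 * B⁻¹ ^ 3 * (m * B) := by gcongr
    have h6 : B⁻¹ ^ 3 * (m * B) = m * (B⁻¹ * B⁻¹) := by field_simp
    have h7 : B⁻¹ ≤ 1 := inv_le_one_of_one_le₀ hB1
    have h8 : m * (B⁻¹ * B⁻¹) ≤ m * (1 * B⁻¹) := by gcongr
    have h9 : m * B⁻¹ / 2 ≤ ∑ ω, Z ω := by
      have : 0 < m * B⁻¹ := by positivity
      nlinarith
    calc m = 2 * B * (m * B⁻¹ / 2) := by field_simp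
      _ ≤ _ := by gcongr
  have hcard : ∑ _ω : ι → Bool, (1 : ℝ) = m := by simp [hm]
  have hJ2 : (∑ ω, Z ω) ^ q ≤ m ^ (q - 1) * ∑ ω, Z ω ^ q := by
    have := sum_mul_rpow_le Finset.univ hq (g := fun _ : ι → Bool => (1 : ℝ)) (f := Z)
      (fun _ => zero_le_one) hZ0
    simpa only [one_mul, hcard] using this
  have h10 : m ^ q ≤ (2 * B) ^ q * (m ^ (q - 1) * ∑ ω, Z ω ^ q) := by
    calc m ^ q ≤ (2 * B * ∑ ω, Z ω) ^ q := Real.rpow_le_rpow hm0.le h1 (by linarith)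
      _ = (2 * B) ^ q * (∑ ω, Z ω) ^ q :=
        Real.mul_rpow (by positivity) (Finset.sum_nonneg fun ω _ => hZ0 ω)
      _ ≤ _ := by gcongr
  have e : m ^ q = m ^ (q - 1) * m := by rw [← Real.rpow_add_one hm0.ne', sub_add_cancel]
  rw [e, mul_left_comm] at h10
  exact le_of_mul_le_mul_left h10 (by positivity)

end Khinchine

section SquareFunction

lemma lintegral_enorm_rpow_eq_norm_rpow {Ω : Type*} [MeasurableSpace Ω] {μ : Measure Ω} {q : ℝ}
    (hq : 0 < q) [Fact (1 ≤ ENNReal.ofReal q)] (f : Lp ℂ (ENNReal.ofReal q) μ) :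
    ∫⁻ z, ‖f z‖ₑ ^ q ∂μ = ENNReal.ofReal (‖f‖ ^ q) := by
  have h0 : ENNReal.ofReal q ≠ 0 := by simpa using hq
  have h1 : ‖f‖ₑ = (∫⁻ z, ‖f z‖ₑ ^ q ∂μ) ^ (1 / q) := by
    rw [Lp.enorm_def, eLpNorm_eq_lintegral_rpow_enorm_toReal h0 ENNReal.ofReal_ne_top,
      ENNReal.toReal_ofReal hq.le]
  rw [← ENNReal.ofReal_rpow_of_nonneg (norm_nonneg f) hq.le, ofReal_norm, h1, ← ENNReal.rpow_mul,
    one_div_mul_cancel hq.ne', ENNReal.rpow_one]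

variable {X : Type*} [NormedAddCommGroup X] [NormedSpace ℂ X]

lemma SummingIneq.sum_boolSign_le {Y : Type*} [NormedAddCommGroup Y] [NormedSpace ℂ Y]
    {q R C M : ℝ} (hq : 0 < q) (hqR : q ≤ R) (hC : 0 ≤ C) (hM : 0 ≤ M) {T : X →ₗ[ℂ] Y}
    (hT : SummingIneq R T C) {ι : Type} [Fintype ι] [DecidableEq ι] (x : ι → X)
    (hx : ∀ φ : X →L[ℂ] ℂ, ‖φ‖ ≤ 1 → ∑ i, ‖φ (x i)‖ ^ 2 ≤ M ^ 2) :
    ∑ ω : ι → Bool, ‖T (∑ i, (boolSign (ω i) : ℂ) • x i)‖ ^ q ≤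
      2 ^ Fintype.card ι * (((⌈R⌉₊.factorial : ℝ) * (2 * Real.exp 2)) ^ (q / R) * (C * M) ^ q) := by
  have hR : 0 < R := hq.trans_le hqR
  set B : ℝ := (⌈R⌉₊.factorial : ℝ) * (2 * Real.exp 2) with hB
  have hB0 : 0 < B := by positivity
  set m : ℝ := 2 ^ Fintype.card ι with hm
  have hm0 : 0 < m := by positivity
  have h1 := hT (ι → Bool) (fun ω => ∑ i, (boolSign (ω i) : ℂ) • x i) ((m * B) ^ (1 / R) * M)
    (by positivity) (by
      intro φ hφ
      simp only [map_sum, map_smul, smul_eq_mul]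
      refine (sum_norm_boolSign_rpow_le hR _).trans ?_
      rw [Real.mul_rpow (by positivity) hM, ← Real.rpow_mul (by positivity),
        one_div_mul_cancel hR.ne', Real.rpow_one]
      refine mul_le_mul_of_nonneg_left ?_ (by positivity)
      have h2 := Real.rpow_le_rpow (Finset.sum_nonneg fun i _ => by positivity) (hx φ hφ)
        (show 0 ≤ R / 2 by positivity)
      rwa [← Real.rpow_two M, ← Real.rpow_mul hM, mul_div_cancel₀ _ (two_ne_zero)] at h2)
  set S := ∑ ω : ι → Bool, ‖T (∑ i, (boolSign (ω i) : ℂ) • x i)‖ ^ q with hS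
  have hS0 : 0 ≤ S := Finset.sum_nonneg fun ω _ => by positivity
  have h2 := sum_mul_rpow_le Finset.univ ((one_le_div hq).2 hqR) (g := fun _ : ι → Bool => (1 : ℝ))
    (f := fun ω => ‖T (∑ i, (boolSign (ω i) : ℂ) • x i)‖ ^ q) (fun _ => zero_le_one)
    (fun ω => by positivity)
  simp only [one_mul, ← Real.rpow_mul (norm_nonneg _), mul_div_cancel₀ _ hq.ne'] at h2
  have hcard : ∑ _ω : ι → Bool, (1 : ℝ) = m := by simp [hm]
  rw [hcard, ← hS] at h2
  have h3 : S ^ (R / q) ≤ (m * (B ^ (q / R) * (C * M) ^ q)) ^ (R / q) := by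
    refine h2.trans ((mul_le_mul_of_nonneg_left h1 (by positivity)).trans (le_of_eq ?_))
    have e1 : (C * ((m * B) ^ (1 / R) * M)) ^ R = m * B * (C * M) ^ R := by
      rw [mul_left_comm, Real.mul_rpow (by positivity) (by positivity),
        ← Real.rpow_mul (by positivity), one_div_mul_cancel hR.ne', Real.rpow_one]
    have e2 : (B ^ (q / R)) ^ (R / q) = B := by
      rw [← Real.rpow_mul hB0.le, div_mul_div_cancel₀ hR.ne', div_self hq.ne', Real.rpow_one]
    have e3 : ((C * M) ^ q) ^ (R / q) = (C * M) ^ R := by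
      rw [← Real.rpow_mul (mul_nonneg hC hM), mul_div_cancel₀ _ hq.ne']
    rw [e1, Real.mul_rpow hm0.le (by positivity),
      Real.mul_rpow (x := B ^ (q / R)) (by positivity) (by positivity),
      e2, e3, Real.rpow_sub hm0, Real.rpow_one]
    field_simp
  exact (Real.rpow_le_rpow_iff hS0 (by positivity) (by positivity)).1 h3

/-- Square function estimate for summing operators into `L^q`. -/
lemma SummingIneq.exists_lintegral_squareFunction_le (Ω : Type*) [MeasurableSpace Ω]
    (X : Type*) [NormedAddCommGroup X] [NormedSpace ℂ X] {q r : ℝ} (hq : 1 ≤ q) (hr : 1 ≤ r)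
    [Fact (1 ≤ ENNReal.ofReal q)] :
    ∃ D > (0 : ℝ), ∀ (μ : Measure Ω) (T : X →ₗ[ℂ] Lp ℂ (ENNReal.ofReal q) μ) (C : ℝ), 0 ≤ C →
      SummingIneq r T C → ∀ (ι : Type) [Fintype ι] (x : ι → X) (h : ι → Ω → ℂ),
      (∀ i, T (x i) =ᵐ[μ] h i) → ∀ M : ℝ, 0 ≤ M →
      (∀ φ : X →L[ℂ] ℂ, ‖φ‖ ≤ 1 → ∑ i, ‖φ (x i)‖ ^ 2 ≤ M ^ 2) →
      ∫⁻ z, ENNReal.ofReal ((∑ i, ‖h i z‖ ^ 2) ^ (q / 2)) ∂μ ≤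
        ENNReal.ofReal ((D * (C * M)) ^ q) := by
  have hq0 : 0 < q := by linarith
  obtain ⟨A, hA, hlow⟩ := le_sum_norm_boolSign_rpow hq
  set R := max r q with hR
  have hR0 : 0 < R := hq0.trans_le (le_max_right _ _)
  set B : ℝ := (⌈R⌉₊.factorial : ℝ) * (2 * Real.exp 2) with hB
  have hB0 : 0 < B := by positivity
  refine ⟨(A * B ^ (q / R)) ^ (1 / q), by positivity, ?_⟩
  intro μ T C hC hT ι _ x h hxh M hM hx
  classical
  have hup := (hT.mono_exponent (by linarith) (le_max_left r q) hC).sum_boolSign_le hq0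
    (le_max_right r q) hC hM x hx
  rw [← hR, ← hB] at hup
  set m : ℝ := 2 ^ Fintype.card ι with hm
  have hm0 : 0 < m := by positivity
  have hpt : ∀ᵐ z ∂μ, ENNReal.ofReal ((∑ i, ‖h i z‖ ^ 2) ^ (q / 2)) ≤
      ENNReal.ofReal (A / m) *
        ∑ ω : ι → Bool, ‖T (∑ i, (boolSign (ω i) : ℂ) • x i) z‖ₑ ^ q := by
    have hT' : ∀ᵐ z ∂μ, ∀ ω : ι → Bool, T (∑ i, (boolSign (ω i) : ℂ) • x i) z =
        ∑ i, (boolSign (ω i) : ℂ) * h i z := by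
      refine ae_all_iff.2 fun ω => ?_
      rw [map_sum]
      have h1 : ∀ i, T ((boolSign (ω i) : ℂ) • x i) =ᵐ[μ]
          fun z => (boolSign (ω i) : ℂ) * h i z := by
        intro i
        rw [map_smul]
        filter_upwards [Lp.coeFn_smul (boolSign (ω i) : ℂ) (T (x i)), hxh i] with z hz1 hz2
        rw [hz1, Pi.smul_apply, hz2, smul_eq_mul]
      filter_upwards [Lp.coeFn_finsetSum Finset.univ fun i => T ((boolSign (ω i) : ℂ) • x i),
        ae_all_iff.2 h1] with z hz1 hz2
      rw [hz1, Finset.sum_apply]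
      exact Finset.sum_congr rfl fun i _ => hz2 i
    filter_upwards [hT'] with z hz
    simp_rw [hz]
    have h2 : ∀ ω : ι → Bool, ‖∑ i, (boolSign (ω i) : ℂ) * h i z‖ₑ ^ q =
        ENNReal.ofReal (‖∑ i, (boolSign (ω i) : ℂ) * h i z‖ ^ q) := fun ω => by
      rw [← ENNReal.ofReal_rpow_of_nonneg (norm_nonneg _) hq0.le, ofReal_norm]
    simp_rw [h2]
    rw [← ENNReal.ofReal_sum_of_nonneg fun ω _ => by positivity,
      ← ENNReal.ofReal_mul (by positivity)]
    refine ENNReal.ofReal_le_ofReal ?_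
    rw [div_mul_eq_mul_div, le_div_iff₀ hm0, mul_comm]
    exact hlow ι fun i => h i z
  refine (lintegral_mono_ae hpt).trans ?_
  rw [lintegral_const_mul' _ _ ENNReal.ofReal_ne_top, lintegral_finsetSum' _ fun ω _ =>
    (Lp.aestronglyMeasurable _).enorm.pow_const q]
  simp_rw [lintegral_enorm_rpow_eq_norm_rpow hq0]
  rw [← ENNReal.ofReal_sum_of_nonneg fun ω _ => by positivity,
    ← ENNReal.ofReal_mul (by positivity)]
  refine ENNReal.ofReal_le_ofReal ((mul_le_mul_of_nonneg_left hup (by positivity)).trans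
    (le_of_eq ?_))
  have e : ((A * B ^ (q / R)) ^ (1 / q)) ^ q = A * B ^ (q / R) := by
    rw [← Real.rpow_mul (by positivity), one_div_mul_cancel hq0.ne', Real.rpow_one]
  rw [Real.mul_rpow (by positivity) (mul_nonneg hC hM), e]
  field_simp

end SquareFunction

section CarlesonBeta

open scoped Classical in
lemma sum_carlesonBeta_rpow_le {n : ℕ} {p q α δ K N E : ℝ} (hq : 0 < q) (hδ : 0 < δ) (hK : 0 ≤ K)
    (hN : 0 ≤ N) {μ : Measure (En n)} {a : ℕ → En n} (ha : ∀ k, ‖a k‖ < 1) {F : Finset ℕ}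
    (hover : ∀ z, ((F.filter fun k => z ∈ bergmanBall (a k) δ).card : ℝ) ≤ N)
    {h : ℕ → En n → ℂ}
    (hh : ∀ k, ∀ z ∈ bergmanBall (a k) δ, (1 - ‖a k‖ ^ 2) ^ (-((n + 1 + α) / p)) ≤ K * ‖h k z‖)
    {l : ℕ → ℝ} (hl : ∀ k, 0 ≤ l k)
    (hIle : ∫⁻ z, ENNReal.ofReal ((∑ k ∈ F, (l k * ‖h k z‖) ^ 2) ^ (q / 2)) ∂μ ≤
      ENNReal.ofReal E) :
    ∑ k ∈ F, (ENNReal.ofReal (l k) * carlesonBeta n p q α δ μ a k) ^ q ≤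
      ENNReal.ofReal (N * K ^ q * E) := by
  set ρ : ℕ → ℝ := fun k => (1 - ‖a k‖ ^ 2) ^ (-((n + 1 + α) / p)) with hρ
  have hρ0 : ∀ k, 0 ≤ ρ k := fun k => Real.rpow_nonneg (by nlinarith [ha k, norm_nonneg (a k)]) _
  have hmeas : ∀ k, MeasurableSet (bergmanBall (a k) δ) := fun k =>
    (isOpen_bergmanBall (ha k) hδ).measurableSet
  have h1 : ∀ k, (ENNReal.ofReal (l k) * carlesonBeta n p q α δ μ a k) ^ q =
      ∫⁻ z, (bergmanBall (a k) δ).indicator (fun _ => ENNReal.ofReal ((l k * ρ k) ^ q)) z ∂μ := by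
    intro k
    rw [lintegral_indicator_const (hmeas k), carlesonBeta, ← mul_assoc,
      ← ENNReal.ofReal_mul (hl k), ENNReal.mul_rpow_of_nonneg _ _ hq.le, ← ENNReal.rpow_mul,
      one_div_mul_cancel hq.ne', ENNReal.rpow_one,
      ENNReal.ofReal_rpow_of_nonneg (mul_nonneg (hl k) (hρ0 k)) hq.le]
  simp_rw [h1]
  rw [← lintegral_finsetSum _ fun k _ => measurable_const.indicator (hmeas k)]
  rw [ENNReal.ofReal_mul (by positivity)]
  refine le_trans (lintegral_mono (g := fun z => ENNReal.ofReal (N * K ^ q) *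
    ENNReal.ofReal ((∑ k ∈ F, (l k * ‖h k z‖) ^ 2) ^ (q / 2))) fun z => ?_) ?_
  · simp only [Set.indicator_apply]
    rw [← Finset.sum_filter, ← ENNReal.ofReal_sum_of_nonneg fun k _ =>
      Real.rpow_nonneg (mul_nonneg (hl k) (hρ0 k)) _, ← ENNReal.ofReal_mul (by positivity)]
    refine ENNReal.ofReal_le_ofReal ?_
    set Q := ∑ k ∈ F, (l k * ‖h k z‖) ^ 2 with hQ
    have hQ0 : 0 ≤ Q := Finset.sum_nonneg fun k _ => by positivity
    calc ∑ k ∈ F.filter fun k => z ∈ bergmanBall (a k) δ, (l k * ρ k) ^ q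
        ≤ ∑ k ∈ F.filter fun k => z ∈ bergmanBall (a k) δ, K ^ q * Q ^ (q / 2) := by
          refine Finset.sum_le_sum fun k hk => ?_
          rw [Finset.mem_filter] at hk
          have e1 : (l k * ‖h k z‖) ^ 2 ≤ Q := Finset.single_le_sum
            (f := fun k => (l k * ‖h k z‖) ^ 2) (fun k _ => by positivity) hk.1
          have e2 := Real.rpow_le_rpow (by positivity) e1 (show 0 ≤ q / 2 by positivity)
          rw [← Real.rpow_two, ← Real.rpow_mul (mul_nonneg (hl k) (norm_nonneg _)),
            mul_div_cancel₀ _ two_ne_zero] at e2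
          refine (Real.rpow_le_rpow (mul_nonneg (hl k) (hρ0 k))
            (mul_le_mul_of_nonneg_left (hh k z hk.2) (hl k)) hq.le).trans ?_
          rw [mul_left_comm, Real.mul_rpow hK (mul_nonneg (hl k) (norm_nonneg _))]
          exact mul_le_mul_of_nonneg_left e2 (by positivity)
      _ = ((F.filter fun k => z ∈ bergmanBall (a k) δ).card : ℝ) * (K ^ q * Q ^ (q / 2)) := by
          rw [Finset.sum_const, nsmul_eq_mul]
      _ ≤ N * (K ^ q * Q ^ (q / 2)) := mul_le_mul_of_nonneg_right (hover z) (by positivity)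
      _ = N * K ^ q * Q ^ (q / 2) := by ring
  · rw [lintegral_const_mul' _ _ ENNReal.ofReal_ne_top]
    gcongr

lemma carlesonBeta_le_norm {n : ℕ} {p q α δ K : ℝ} (hq : 0 < q) (hδ : 0 < δ) (hK : 0 ≤ K)
    [Fact (1 ≤ ENNReal.ofReal q)] {μ : Measure (En n)} {a : ℕ → En n} {k : ℕ} (ha : ‖a k‖ < 1)
    {h : En n → ℂ}
    (hh : ∀ z ∈ bergmanBall (a k) δ, (1 - ‖a k‖ ^ 2) ^ (-((n + 1 + α) / p)) ≤ K * ‖h z‖)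
    {f : Lp ℂ (ENNReal.ofReal q) μ} (hf : f =ᵐ[μ] h) :
    carlesonBeta n p q α δ μ a k ≤ ENNReal.ofReal (K * ‖f‖) := by
  set ρ : ℝ := (1 - ‖a k‖ ^ 2) ^ (-((n + 1 + α) / p)) with hρ
  have hρ0 : 0 ≤ ρ := Real.rpow_nonneg (by nlinarith [ha, norm_nonneg (a k)]) _
  have hmeas : MeasurableSet (bergmanBall (a k) δ) := (isOpen_bergmanBall ha hδ).measurableSet
  rw [← ENNReal.rpow_le_rpow_iff hq]
  calc carlesonBeta n p q α δ μ a k ^ q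
      = ∫⁻ z, (bergmanBall (a k) δ).indicator (fun _ => ENNReal.ofReal (ρ ^ q)) z ∂μ := by
        rw [lintegral_indicator_const hmeas, carlesonBeta, ENNReal.mul_rpow_of_nonneg _ _ hq.le,
          ← ENNReal.rpow_mul, one_div_mul_cancel hq.ne', ENNReal.rpow_one,
          ENNReal.ofReal_rpow_of_nonneg hρ0 hq.le]
    _ ≤ ∫⁻ z, ENNReal.ofReal (K ^ q) * ‖f z‖ₑ ^ q ∂μ := by
        refine lintegral_mono_ae ?_
        filter_upwards [hf] with z hz
        by_cases hzB : z ∈ bergmanBall (a k) δ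
        · rw [Set.indicator_of_mem hzB, hz, ← ofReal_norm,
            ENNReal.ofReal_rpow_of_nonneg (norm_nonneg _) hq.le,
            ← ENNReal.ofReal_mul (by positivity), ← Real.mul_rpow hK (norm_nonneg _)]
          exact ENNReal.ofReal_le_ofReal (Real.rpow_le_rpow hρ0 (hh z hzB) hq.le)
        · rw [Set.indicator_of_notMem hzB]
          exact zero_le
    _ = ENNReal.ofReal (K * ‖f‖) ^ q := by
        rw [lintegral_const_mul' _ _ ENNReal.ofReal_ne_top, lintegral_enorm_rpow_eq_norm_rpow hq,
          ← ENNReal.ofReal_mul (by positivity), ← Real.mul_rpow hK (norm_nonneg _),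
          ENNReal.ofReal_rpow_of_nonneg (by positivity) hq.le]

lemma ellNormE'_le {s E : ℝ} (hs : 0 < s) {b : ℕ → ℝ≥0∞}
    (h : ∀ F : Finset ℕ, ∑ k ∈ F, b k ^ s ≤ ENNReal.ofReal E ^ s) :
    ellNormE' s b ≤ ENNReal.ofReal E := by
  rw [ellNormE', one_div, ENNReal.rpow_inv_le_iff hs, ENNReal.tsum_eq_iSup_sum]
  exact iSup_le h

lemma le_ofReal_mul_summingNorm {r D : ℝ} {X Y : Type*} [NormedAddCommGroup X] [NormedSpace ℂ X]
    [NormedAddCommGroup Y] {T : X → Y} (hT : IsSummingRS r r T) (hD : 0 < D) {u : ℝ≥0∞}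
    (h : ∀ C, 0 ≤ C → SummingBoundWith r r T C → u ≤ ENNReal.ofReal (D * C)) :
    u ≤ ENNReal.ofReal (D * summingNorm r r T) := by
  obtain ⟨C₀, hC₀, hT₀⟩ := hT
  have hu : u ≠ ⊤ := ((h C₀ hC₀ hT₀).trans_lt ENNReal.ofReal_lt_top).ne
  refine (ENNReal.le_ofReal_iff_toReal_le hu (mul_nonneg hD.le
    (Real.sInf_nonneg fun C hC => hC.1))).2 ?_
  rw [mul_comm, ← div_le_iff₀ hD]
  refine le_csInf ⟨C₀, hC₀, hT₀⟩ fun C hC => ?_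
  rw [div_le_iff₀ hD, mul_comm]
  exact ENNReal.toReal_le_of_le_ofReal (mul_nonneg hD.le hC.1) (h C hC.1 hC.2)

/-- Deduces an `ℓ^t` bound from weighted `ℓ^q` bounds with weights normalized in `ℓ^s`, where
`1 / q = 1 / s + 1 / t`. -/
lemma sum_rpow_le_of_weighted {q s t A : ℝ} (hq : 0 < q) (hs : 0 < s) (ht : 0 < t)
    (hqst : 1 / q = 1 / s + 1 / t) (hA : 0 ≤ A) {b : ℕ → ℝ≥0∞} (F : Finset ℕ)
    (hb : ∀ k ∈ F, b k ≠ ⊤)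
    (h : ∀ l : ℕ → ℝ, (∀ k, 0 ≤ l k) → ∑ k ∈ F, (ENNReal.ofReal (l k) * b k) ^ q ≤
      ENNReal.ofReal ((A * (∑ k ∈ F, l k ^ s) ^ (1 / s)) ^ q)) :
    ∑ k ∈ F, b k ^ t ≤ ENNReal.ofReal A ^ t := by
  have e : (t / s + 1) * q = t := by field_simp at hqst ⊢; linarith
  set c : ℕ → ℝ := fun k => (b k).toReal with hc
  have hc0 : ∀ k, 0 ≤ c k := fun k => ENNReal.toReal_nonneg
  have hbc : ∀ k ∈ F, b k = ENNReal.ofReal (c k) := fun k hk =>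
    (ENNReal.ofReal_toReal (hb k hk)).symm
  set S := ∑ k ∈ F, c k ^ t with hS
  have hS0 : 0 ≤ S := Finset.sum_nonneg fun k _ => Real.rpow_nonneg (hc0 k) _
  have hsum : ∑ k ∈ F, b k ^ t = ENNReal.ofReal S := by
    rw [hS, ENNReal.ofReal_sum_of_nonneg fun k _ => Real.rpow_nonneg (hc0 k) _]
    refine Finset.sum_congr rfl fun k hk => ?_
    rw [hbc k hk, ENNReal.ofReal_rpow_of_nonneg (hc0 k) ht.le]
  rw [hsum, ENNReal.ofReal_rpow_of_nonneg hA ht.le]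
  refine ENNReal.ofReal_le_ofReal ?_
  rcases hS0.eq_or_lt with hz | hSpos
  · rw [← hz]; positivity
  have h1 := h (fun k => c k ^ (t / s)) fun k => Real.rpow_nonneg (hc0 k) _
  have e1 : ∑ k ∈ F, (c k ^ (t / s)) ^ s = S := Finset.sum_congr rfl fun k _ => by
    rw [← Real.rpow_mul (hc0 k), div_mul_cancel₀ _ hs.ne']
  have e2 : ∑ k ∈ F, (ENNReal.ofReal (c k ^ (t / s)) * b k) ^ q = ENNReal.ofReal S := by
    rw [← hsum]
    refine Finset.sum_congr rfl fun k hk => ?_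
    rw [hbc k hk, ← ENNReal.ofReal_mul (Real.rpow_nonneg (hc0 k) _),
      ENNReal.ofReal_rpow_of_nonneg (mul_nonneg (Real.rpow_nonneg (hc0 k) _) (hc0 k)) hq.le,
      ENNReal.ofReal_rpow_of_nonneg (hc0 k) ht.le]
    nth_rewrite 2 [← Real.rpow_one (c k)]
    rw [← Real.rpow_add_of_nonneg (hc0 k) (by positivity) zero_le_one, ← Real.rpow_mul (hc0 k), e]
  rw [e1, e2, ENNReal.ofReal_le_ofReal_iff (by positivity)] at h1
  have h2 := Real.rpow_le_rpow hS0 h1 (show 0 ≤ 1 / q by positivity)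
  rw [← Real.rpow_mul (by positivity), mul_one_div_cancel hq.ne', Real.rpow_one, hqst,
    Real.rpow_add hSpos, mul_comm] at h2
  have h3 := Real.rpow_le_rpow (by positivity) (le_of_mul_le_mul_right h2 (by positivity)) ht.le
  rwa [← Real.rpow_mul hS0, one_div_mul_cancel ht.ne', Real.rpow_one] at h3

end CarlesonBeta

section CarlesonEmbedding

/-- Weighted estimate for the sequence `β_k`, together with the test functions it comes from. -/
lemma exists_testFamily_carlesonBeta {n : ℕ} (hn : 1 ≤ n) {p q r α δ ε : ℝ} (hα : -1 < α)
    (hp : 1 ≤ p) (hq : 1 ≤ q) (hr : 1 ≤ r) (hδ : 0 < δ) (hε : 0 < ε)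
    [Fact (1 ≤ ENNReal.ofReal p)] [Fact (1 ≤ ENNReal.ofReal q)] :
    ∃ K > (0 : ℝ), ∀ a : ℕ → En n, IsSeparated a ε → ∃ G : ℕ → BergmanSpace n p α,
      (∀ (F : Finset ℕ) (c : ℕ → ℂ),
        ‖∑ k ∈ F, c k • G k‖ ≤ K * (∑ k ∈ F, ‖c k‖ ^ p) ^ (1 / p)) ∧
      ∀ (μ : Measure (En n)) (J : BergmanSpace n p α →ₗ[ℂ] Lp ℂ (ENNReal.ofReal q) μ),
        RepresentsEmbedding n p q α μ ⇑J →
        (∀ k, carlesonBeta n p q α δ μ a k ≤ ENNReal.ofReal (K * ‖J (G k)‖)) ∧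
        ∀ C : ℝ, 0 ≤ C → SummingIneq r J C → ∀ (F : Finset ℕ) (l : ℕ → ℝ), (∀ k, 0 ≤ l k) →
          ∀ M : ℝ, 0 ≤ M →
          (∀ φ : BergmanSpace n p α →L[ℂ] ℂ, ‖φ‖ ≤ 1 →
            ∑ k ∈ F, l k ^ 2 * ‖φ (G k)‖ ^ 2 ≤ M ^ 2) →
          ∑ k ∈ F, (ENNReal.ofReal (l k) * carlesonBeta n p q α δ μ a k) ^ q ≤
            ENNReal.ofReal ((K * C * M) ^ q) := by
  have hq0 : 0 < q := by linarith
  obtain ⟨K₀, hK₀, htest⟩ := exists_testFamily hn (δ := δ) hp hα hε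
  obtain ⟨N, hN, hover⟩ := card_overlap_le hn (δ := δ) hε
  obtain ⟨D, hD, hsq⟩ := SummingIneq.exists_lintegral_squareFunction_le (En n)
    (BergmanSpace n p α) hq hr
  refine ⟨max K₀ (N ^ (1 / q) * K₀ * D), by positivity, fun a ha => ?_⟩
  obtain ⟨G, h, hhol, hGh, hlow, hG⟩ := htest a ha
  have hak : ∀ k, ‖a k‖ < 1 := fun k => mem_ball_zero_iff.mp (ha.1 k)
  refine ⟨G, fun F c => (hG F c).trans (mul_le_mul_of_nonneg_right (le_max_left _ _)
    (Real.rpow_nonneg (Finset.sum_nonneg fun k _ => by positivity) _)), fun μ J hJ => ?_⟩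
  have hJG : ∀ k, J (G k) =ᵐ[μ] h k := fun k => hJ (G k) (h k) (hhol k) (hGh k)
  refine ⟨fun k => (carlesonBeta_le_norm hq0 hδ hK₀.le (hak k) (hlow k) (hJG k)).trans
    (ENNReal.ofReal_le_ofReal (mul_le_mul_of_nonneg_right (le_max_left _ _) (norm_nonneg _))), ?_⟩
  intro C hC hT F l hl M hM hφ
  have hIle := hsq μ J C hC hT F (fun k => (l k : ℂ) • G k) (fun k z => (l k : ℂ) * h k z)
    (fun k => by
      rw [map_smul]
      filter_upwards [Lp.coeFn_smul (l k : ℂ) (J (G k)), hJG k] with z hz1 hz2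
      rw [hz1, Pi.smul_apply, hz2, smul_eq_mul]) M hM (fun φ hφ1 => by
      refine le_trans (le_of_eq ?_) (hφ φ hφ1)
      rw [← Finset.sum_coe_sort F]
      refine Finset.sum_congr rfl fun k _ => ?_
      rw [map_smul, norm_smul, Complex.norm_real, Real.norm_of_nonneg (hl k), mul_pow])
  simp only [norm_mul, Complex.norm_real, Real.norm_of_nonneg (hl _)] at hIle
  have hcoe : ∀ z, ∑ k : F, (l k * ‖h k z‖) ^ 2 = ∑ k ∈ F, (l k * ‖h k z‖) ^ 2 := fun z =>
    Finset.sum_coe_sort F fun k => (l k * ‖h k z‖) ^ 2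
  simp only [hcoe] at hIle
  refine (sum_carlesonBeta_rpow_le hq0 hδ hK₀.le hN.le hak (hover a ha F) hlow hl hIle).trans
    (ENNReal.ofReal_le_ofReal ?_)
  have e : N * K₀ ^ q * (D * (C * M)) ^ q = (N ^ (1 / q) * K₀ * D * C * M) ^ q := by
    have e1 : (N ^ (1 / q)) ^ q = N := by
      rw [← Real.rpow_mul hN.le, one_div_mul_cancel hq0.ne', Real.rpow_one]
    nth_rewrite 1 [← e1]
    rw [← Real.mul_rpow (by positivity) hK₀.le, ← Real.mul_rpow (by positivity) (by positivity)]
    ring_nf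
  rw [e]
  gcongr
  exact le_max_right _ _

variable {X : Type*} [NormedAddCommGroup X] [NormedSpace ℂ X] {G : ℕ → X} {K p : ℝ}

lemma sum_norm_apply_sq_le (hp : 2 ≤ p) (hK : 0 ≤ K)
    (hG : ∀ (F : Finset ℕ) (c : ℕ → ℂ), ‖∑ k ∈ F, c k • G k‖ ≤ K * (∑ k ∈ F, ‖c k‖ ^ p) ^ (1 / p))
    {φ : X →L[ℂ] ℂ} (hφ : ‖φ‖ ≤ 1) (F : Finset ℕ) :
    ∑ k ∈ F, (1 : ℝ) ^ 2 * ‖φ (G k)‖ ^ 2 ≤ K ^ 2 := by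
  have h := sum_norm_apply_rpow_le (by linarith) hK hG hφ F (s := 2)
    (by rw [div_le_iff₀ (by linarith)]; linarith)
  simpa using h

lemma SummingIneq.sum_rpow_le_of_le_norm {Y : Type*} [NormedAddCommGroup Y] {s C : ℝ}
    (hs0 : 0 < s) {T : X → Y} (hC : 0 ≤ C) (hT : SummingIneq s T C) (hp : 1 < p) (hK : 0 ≤ K)
    (hG : ∀ (F : Finset ℕ) (c : ℕ → ℂ), ‖∑ k ∈ F, c k • G k‖ ≤ K * (∑ k ∈ F, ‖c k‖ ^ p) ^ (1 / p))
    (hs : p / (p - 1) ≤ s) {b : ℕ → ℝ≥0∞} (hb : ∀ k, b k ≤ ENNReal.ofReal (K * ‖T (G k)‖))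
    (F : Finset ℕ) : ∑ k ∈ F, b k ^ s ≤ ENNReal.ofReal (K ^ 2 * C) ^ s := by
  have h := hT F (fun k => G k) K hK fun φ hφ => by
    rw [Finset.sum_coe_sort F fun k => ‖φ (G k)‖ ^ s]
    exact sum_norm_apply_rpow_le hp hK hG hφ F hs
  rw [Finset.sum_coe_sort F fun k => ‖T (G k)‖ ^ s] at h
  calc ∑ k ∈ F, b k ^ s ≤ ∑ k ∈ F, ENNReal.ofReal (K * ‖T (G k)‖) ^ s := by
        gcongr with k; exact hb k
    _ = ENNReal.ofReal (∑ k ∈ F, K ^ s * ‖T (G k)‖ ^ s) := by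
        rw [ENNReal.ofReal_sum_of_nonneg fun k _ => by positivity]
        refine Finset.sum_congr rfl fun k _ => ?_
        rw [ENNReal.ofReal_rpow_of_nonneg (by positivity) hs0.le,
          Real.mul_rpow hK (norm_nonneg _)]
    _ ≤ ENNReal.ofReal ((K ^ 2 * C) ^ s) := by
        refine ENNReal.ofReal_le_ofReal ?_
        rw [← Finset.mul_sum]
        refine (mul_le_mul_of_nonneg_left h (by positivity)).trans (le_of_eq ?_)
        rw [← Real.mul_rpow hK (by positivity)]
        ring_nf
    _ = ENNReal.ofReal (K ^ 2 * C) ^ s := by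
        rw [ENNReal.ofReal_rpow_of_nonneg (by positivity) hs0.le]

end CarlesonEmbedding

theorem statement9 (n : ℕ) (hn : 1 ≤ n) (p q r α δ ε : ℝ)
    (hα : -1 < α) (hp : 1 ≤ p) (hq : 1 ≤ q) (hr : 1 ≤ r) (hδ : 0 < δ) (hε : 0 < ε)
    [Fact (1 ≤ ENNReal.ofReal p)] [Fact (1 ≤ ENNReal.ofReal q)] :
    ∃ C > (0 : ℝ), ∀ a : ℕ → En n, IsSeparated a ε →
      ∀ μ : Measure (En n), μ (unitBall n)ᶜ = 0 →
      ∀ J : BergmanSpace n p α →ₗ[ℂ] Lp ℂ (ENNReal.ofReal q) μ,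
        RepresentsEmbedding n p q α μ ⇑J → IsSummingRS r r ⇑J →
        -- (1) the case 1 ≤ p,q ≤ 2
        (p ≤ 2 → q ≤ 2 → ¬(p = 1 ∧ q = 2) →
          ellNormE' (2 * p * q / (2 * p - 2 * q + p * q)) (carlesonBeta n p q α δ μ a) ≤
            ENNReal.ofReal (C * summingNorm r r ⇑J)) ∧
        (p = 1 → q = 2 →
          (⨆ k, carlesonBeta n p q α δ μ a k) ≤
            ENNReal.ofReal (C * summingNorm r r ⇑J)) ∧
        -- (2) the case p > 1, 1 ≤ r ≤ p'
        (1 < p → r ≤ p / (p - 1) →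
          ellNormE' (p / (p - 1)) (carlesonBeta n p q α δ μ a) ≤
            ENNReal.ofReal (C * summingNorm r r ⇑J)) ∧
        -- (3) the case p > 1, p' ≤ r
        (1 < p → p / (p - 1) ≤ r →
          ellNormE' r (carlesonBeta n p q α δ μ a) ≤
            ENNReal.ofReal (C * summingNorm r r ⇑J)) ∧
        -- (4) the case p,q ≥ 2
        (2 ≤ p → 2 ≤ q →
          ellNormE' q (carlesonBeta n p q α δ μ a) ≤
            ENNReal.ofReal (C * summingNorm r r ⇑J)) := by
  obtain ⟨K, hK, hfam⟩ := exists_testFamily_carlesonBeta hn (r := r) hα hp hq hr hδ hε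
  have hq0 : 0 < q := by linarith
  have hr0 : 0 < r := by linarith
  refine ⟨K ^ 2, by positivity, fun a ha μ _ J hJ hsum => ?_⟩
  obtain ⟨G, hG, hGJ⟩ := hfam a ha
  obtain ⟨hβ, hweight⟩ := hGJ μ J hJ
  have hreduce : ∀ u : ℝ≥0∞, (∀ C, 0 ≤ C → SummingIneq r J C → u ≤ ENNReal.ofReal (K ^ 2 * C)) →
      u ≤ ENNReal.ofReal (K ^ 2 * summingNorm r r J) := fun u h =>
    le_ofReal_mul_summingNorm hsum (by positivity) fun C hC hT =>
      h C hC (hT.summingIneq hr0 hC)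
  have hone : ∀ C, 0 ≤ C → SummingIneq r J C → ∀ F : Finset ℕ,
      (∀ φ : BergmanSpace n p α →L[ℂ] ℂ, ‖φ‖ ≤ 1 →
        ∑ k ∈ F, (1 : ℝ) ^ 2 * ‖φ (G k)‖ ^ 2 ≤ K ^ 2) →
      ∑ k ∈ F, carlesonBeta n p q α δ μ a k ^ q ≤ ENNReal.ofReal (K ^ 2 * C) ^ q := by
    intro C hC hT F hφ
    have h := hweight C hC hT F (fun _ => 1) (fun _ => zero_le_one) K hK.le hφ
    simp only [ENNReal.ofReal_one, one_mul] at h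
    rwa [ENNReal.ofReal_rpow_of_nonneg (by positivity) hq0.le, sq, mul_right_comm]
  have hsq : 2 ≤ p → ellNormE' q (carlesonBeta n p q α δ μ a) ≤
      ENNReal.ofReal (K ^ 2 * summingNorm r r J) := fun hp2 =>
    hreduce _ fun C hC hT => ellNormE'_le hq0 fun F =>
      hone C hC hT F fun φ hφ => sum_norm_apply_sq_le hp2 hK.le hG hφ F
  refine ⟨fun hp2 hq2 hpq => ?_, fun hp1 hq2 => ?_, fun hp1 hrp => ?_, fun hp1 hpr => ?_,
    fun hp2 _ => hsq hp2⟩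
  · rcases hp2.eq_or_lt with rfl | hp2
    · have e : 2 * 2 * q / (2 * 2 - 2 * q + 2 * q) = q := by ring
      rw [e]
      exact hsq le_rfl
    have hden : 0 < 2 * p - 2 * q + p * q := by
      rcases hp.eq_or_lt with rfl | hp1
      · have : q < 2 := lt_of_le_of_ne hq2 fun h => hpq ⟨rfl, h⟩
        linarith
      · nlinarith
    have h2p : 0 < 2 - p := by linarith
    have hp0 : 0 < p := by linarith
    refine hreduce _ fun C hC hT => ellNormE'_le (by positivity) fun F => ?_
    refine sum_rpow_le_of_weighted hq0 (s := 2 * p / (2 - p)) (by positivity) (by positivity)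
      (by field_simp; ring) (by positivity) F
      (fun k _ => ((hβ k).trans_lt ENNReal.ofReal_lt_top).ne) fun l hl => ?_
    refine (hweight C hC hT F l hl (K * (∑ k ∈ F, l k ^ (2 * p / (2 - p))) ^ ((2 - p) / (2 * p)))
      (mul_nonneg hK.le (Real.rpow_nonneg (Finset.sum_nonneg fun k _ =>
        Real.rpow_nonneg (hl k) _) _))
      fun φ hφ => sum_sq_mul_norm_apply_sq_le hp hp2 hK.le hG hφ F hl).trans (le_of_eq ?_)
    rw [one_div_div]
    ring_nf
  · refine hreduce _ fun C hC hT => iSup_le fun k => ?_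
    have h := hone C hC hT {k} fun φ hφ => by
      rw [Finset.sum_singleton, one_pow, one_mul]
      gcongr
      exact norm_apply_le hG hφ k
    rwa [Finset.sum_singleton, ENNReal.rpow_le_rpow_iff hq0] at h
  · have hp' : 0 < p / (p - 1) := hr0.trans_le hrp
    exact hreduce _ fun C hC hT => ellNormE'_le hp' fun F =>
      (hT.mono_exponent hr0 hrp hC).sum_rpow_le_of_le_norm hp' hC hp1 hK.le hG le_rfl hβ F
  · exact hreduce _ fun C hC hT => ellNormE'_le hr0 fun F =>
      hT.sum_rpow_le_of_le_norm hr0 hC hp1 hK.le hG hpr hβ F
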